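/- arXiv:math/0311467 — 4 statements merged into one kernel-verified Lean document; each statement's English description precedes it below -/
import Mathlib

section
/- Assume additionally that c_j ≠ c for all 1 < j < l. Set r := #{i : c_i > c} and s := (Σ_{i : c_i ≤ c} c_i) − 2c. Then the Benlolo–Sanderson element f is a greatest common divisor of the (s+c)×(s+c) minors of the matrix power 𝒳^{r+1}: f divides the determinant of every square submatrix of 𝒳^{r+1} obtained by choosing s+c rows and s+c columns, and every polynomial g ∈ R that divides all of these minors divides f. -/
open Finset MvPolynomial

noncomputable section



/-- Sum of the first `j` block sizes (blocks are 1-indexed). -/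
def blkSum (c : ℕ → ℕ) (j : ℕ) : ℕ := ∑ i ∈ Finset.Icc 1 j, c i

/-- Block index of `a ∈ {1,…,n}`: the least `j` with `a ≤ c 1 + ⋯ + c j`. -/
def blk (c : ℕ → ℕ) (a : ℕ) : ℕ := sInf {j | a ≤ blkSum c j}

/-- The index set `P` of positions of the nilradical `m`: pairs `(a, b)` of indices
(0-indexed here, representing the 1-indexed pair `(a+1, b+1)`) with `b < a` and
`blk (b+1) < blk (a+1)`. -/
abbrev Pos (c : ℕ → ℕ) (n : ℕ) : Type :=
  {p : Fin n × Fin n // p.2 < p.1 ∧ blk c (p.2.1 + 1) < blk c (p.1.1 + 1)}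

/-- The generic matrix `𝒳` of the nilradical `m`. -/
def genX (c : ℕ → ℕ) (n : ℕ) : Matrix (Fin n) (Fin n) (MvPolynomial (Pos c n) ℂ) :=
  Matrix.of fun a b =>
    if h : b < a ∧ blk c (b.1 + 1) < blk c (a.1 + 1) then X (⟨(a, b), h⟩ : Pos c n) else 0

/-- The matrix `M(t)`: the `(n-c) × (n-c)` submatrix of `𝒳 + t · Id` consisting of
rows `c+1, …, n` and columns `1, …, n-c`, viewed over `R[t]`.  Here `m = n - c`. -/
def Mmat (c : ℕ → ℕ) (n m : ℕ) (h : m + c 1 = n) :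
    Matrix (Fin m) (Fin m) (Polynomial (MvPolynomial (Pos c n) ℂ)) :=
  Matrix.of fun i j =>
    Polynomial.C (genX c n (Fin.cast h (i.addNat (c 1)))
        (Fin.castLE (le_trans (Nat.le_add_right m (c 1)) (le_of_eq h)) j))
      + if (Fin.cast h (i.addNat (c 1)) : Fin n)
            = Fin.castLE (le_trans (Nat.le_add_right m (c 1)) (le_of_eq h)) j
        then Polynomial.X else 0

/-- `d := Σᵢ max (cᵢ - c, 0)` (truncated subtraction). -/
def dBS (c : ℕ → ℕ) (l : ℕ) : ℕ := ∑ i ∈ Finset.Icc 1 l, (c i - c 1)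

/-- The Benlolo–Sanderson element: the coefficient of `t^d` in `det M(t)`. -/
def BSf (c : ℕ → ℕ) (l n m : ℕ) (h : m + c 1 = n) : MvPolynomial (Pos c n) ℂ :=
  ((Mmat c n m h).det).coeff (dBS c l)

/-- The point of the nilradical determined by `ξ : P → ℂ`. -/
def Xpt (c : ℕ → ℕ) (n : ℕ) (ξ : Pos c n → ℂ) : Matrix (Fin n) (Fin n) ℂ :=
  Matrix.of fun a b =>
    if h : b < a ∧ blk c (b.1 + 1) < blk c (a.1 + 1) then ξ ⟨(a, b), h⟩ else 0


section minors
variable {α : Type*} [LinearOrder α] {R : Type*} [CommRing R]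

/-- minor of `Y` with row set `A` and column set `B` -/
def mnr (Y : Matrix α α R) (A B : Finset α) : R :=
  if h : B.card = A.card then
    (Y.submatrix (A.orderEmbOfFin rfl) (B.orderEmbOfFin h)).det else 0

theorem mnr_card_ne (Y : Matrix α α R) {A B : Finset α} (h : B.card ≠ A.card) : mnr Y A B = 0 := by
  simp [mnr, h]

theorem mnr_eq_det (Y : Matrix α α R) {k : ℕ} (A B : Finset α) (hA : A.card = k) (hB : B.card = k) :
    mnr Y A B = (Y.submatrix (A.orderEmbOfFin hA) (B.orderEmbOfFin hB)).det := by
  subst hA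
  simp [mnr, hB]

theorem mnr_image (Y : Matrix α α R) {k : ℕ} (ρ κ : Fin k → α) (hρ : StrictMono ρ)
    (hκ : StrictMono κ) :
    mnr Y (univ.image ρ) (univ.image κ) = (Y.submatrix ρ κ).det := by
  have hA : (univ.image ρ).card = k := by
    rw [card_image_of_injective _ hρ.injective]; simp
  have hB : (univ.image κ).card = k := by
    rw [card_image_of_injective _ hκ.injective]; simp
  rw [mnr_eq_det Y _ _ hA hB]
  rw [← Finset.orderEmbOfFin_unique hA (f := ρ) (by simp) hρ,
    ← Finset.orderEmbOfFin_unique hB (f := κ) (by simp) hκ]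

theorem mnr_transpose (Y : Matrix α α R) (A B : Finset α) : mnr Y.transpose A B = mnr Y B A := by
  by_cases h : B.card = A.card
  · rw [mnr_eq_det _ A B rfl h, mnr_eq_det _ B A h rfl, ← Matrix.det_transpose]
    rfl
  · rw [mnr_card_ne _ h, mnr_card_ne _ (Ne.symm h)]

theorem mnr_map {S : Type*} [CommRing S] (φ : R →+* S) (Y : Matrix α α R) (A B : Finset α) :
    φ (mnr Y A B) = mnr (Y.map φ) A B := by
  by_cases h : B.card = A.card
  · rw [mnr_eq_det _ A B rfl h, mnr_eq_det _ A B rfl h, RingHom.map_det]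
    rfl
  · rw [mnr_card_ne _ h, mnr_card_ne _ h, map_zero]

theorem card_filter_orderEmb (A : Finset α) {k : ℕ} (hA : A.card = k) (P : α → Prop)
    [DecidablePred P] :
    (univ.filter fun i : Fin k => P (A.orderEmbOfFin hA i)).card = (A.filter P).card := by
  rw [← card_map (A.orderEmbOfFin hA).toEmbedding]
  congr 1
  ext x
  simp only [mem_map, mem_filter, mem_univ, true_and]
  constructor
  · rintro ⟨i, hi, rfl⟩
    exact ⟨by simp, hi⟩
  · rintro ⟨hx, hP⟩
    have : x ∈ Set.range (A.orderEmbOfFin hA) := by simpa using hx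
    obtain ⟨i, rfl⟩ := this
    exact ⟨i, hP, rfl⟩

/-- pigeonhole vanishing -/
theorem mnr_eq_zero (Y : Matrix α α R) (A B : Finset α) (P Q : α → Prop) [DecidablePred P]
    [DecidablePred Q] (hY : ∀ a ∈ A, ∀ b ∈ B, P a → ¬ Q b → Y a b = 0)
    (h : (B.filter Q).card < (A.filter P).card) : mnr Y A B = 0 := by
  by_cases hc : B.card = A.card
  swap
  · exact mnr_card_ne _ hc
  rw [mnr_eq_det _ A B rfl hc, ← Matrix.det_transpose, Matrix.det_apply]
  apply Finset.sum_eq_zero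
  intro σ _
  rw [← card_filter_orderEmb A rfl, ← card_filter_orderEmb B hc] at h
  have : ∃ i, P (A.orderEmbOfFin rfl i) ∧ ¬ Q (B.orderEmbOfFin hc (σ i)) := by
    by_contra hcon
    push Not at hcon
    refine absurd h (not_lt.mpr ?_)
    apply Finset.card_le_card_of_injOn σ
    · intro i hi
      simp only [coe_filter, mem_univ, true_and, Set.mem_ofPred_eq] at hi ⊢
      exact hcon i hi
    · exact σ.injective.injOn
  obtain ⟨i, hP, hQ⟩ := this
  rw [Finset.prod_eq_zero (mem_univ i), smul_zero]
  simp only [Matrix.transpose_apply, Matrix.submatrix_apply]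
  exact hY _ (by simp) _ (by simp) hP hQ

theorem orderEmb_concat (A : Finset α) (P : α → Prop) [DecidablePred P]
    (hP : ∀ x ∈ A, ∀ y ∈ A, P x → ¬ P y → x < y) {k j : ℕ} (h1 : (A.filter P).card = k)
    (h2 : (A.filter fun x => ¬ P x).card = j) (h : A.card = k + j) :
    (A.orderEmbOfFin h : Fin (k + j) → α) =
      Fin.append ((A.filter P).orderEmbOfFin h1) ((A.filter fun x => ¬ P x).orderEmbOfFin h2) := by
  symm
  apply Finset.orderEmbOfFin_unique
  · intro x
    refine Fin.addCases (fun i => ?_) (fun i => ?_) x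
    · rw [Fin.append_left]
      exact (mem_filter.mp (Finset.orderEmbOfFin_mem (A.filter P) h1 i)).1
    · rw [Fin.append_right]
      exact (mem_filter.mp (Finset.orderEmbOfFin_mem (A.filter fun x => ¬ P x) h2 i)).1
  · intro x y
    refine Fin.addCases (fun i => ?_) (fun i => ?_) x <;>
    refine Fin.addCases (fun j => ?_) (fun j => ?_) y <;>
    simp only [Fin.append_left, Fin.append_right, Fin.lt_def, Fin.val_castAdd, Fin.val_natAdd,
      OrderEmbedding.lt_iff_lt]
    · exact fun h => h
    · intro _
      have a1 := (mem_filter.mp (Finset.orderEmbOfFin_mem (A.filter P) h1 i))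
      have a2 := (mem_filter.mp (Finset.orderEmbOfFin_mem (A.filter fun x => ¬ P x) h2 j))
      exact hP _ a1.1 _ a2.1 a1.2 a2.2
    · intro h; omega
    · intro h; omega

/-- block triangular splitting -/
theorem mnr_split (Y : Matrix α α R) (A B : Finset α) (P Q : α → Prop) [DecidablePred P]
    [DecidablePred Q] (hP : ∀ x ∈ A, ∀ y ∈ A, P x → ¬ P y → x < y)
    (hQ : ∀ x ∈ B, ∀ y ∈ B, Q x → ¬ Q y → x < y)
    (hY : ∀ a ∈ A, ∀ b ∈ B, P a → ¬ Q b → Y a b = 0)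
    (h : (B.filter Q).card = (A.filter P).card) :
    mnr Y A B = mnr Y (A.filter P) (B.filter Q) *
      mnr Y (A.filter fun x => ¬ P x) (B.filter fun x => ¬ Q x) := by
  have eA := Finset.card_filter_add_card_filter_not (s := A) P
  have eB := Finset.card_filter_add_card_filter_not (s := B) Q
  by_cases hc : B.card = A.card
  swap
  · rw [mnr_card_ne _ hc, mnr_card_ne (A := A.filter fun x => ¬ P x), mul_zero]
    omega
  have h2 : (B.filter fun x => ¬ Q x).card = (A.filter fun x => ¬ P x).card := by omega
  rw [mnr_eq_det Y A B eA.symm (hc.trans eA.symm), mnr_eq_det _ _ _ rfl h, mnr_eq_det _ _ _ rfl h2,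
    orderEmb_concat A P hP rfl rfl eA.symm, orderEmb_concat B Q hQ h h2 (hc.trans eA.symm),
    ← Matrix.det_submatrix_equiv_self finSumFinEquiv, ← Matrix.det_fromBlocks_zero₁₂ _ (Y.submatrix ((A.filter fun x => ¬ P x).orderEmbOfFin rfl)
      ((B.filter Q).orderEmbOfFin h))]
  · congr 1
    ext i j
    rcases i with i | i <;> rcases j with j | j <;>
    simp only [Matrix.submatrix_apply, finSumFinEquiv_apply_left, finSumFinEquiv_apply_right,
      Fin.append_left, Fin.append_right, Matrix.fromBlocks_apply₁₁, Matrix.fromBlocks_apply₁₂,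
      Matrix.fromBlocks_apply₂₁, Matrix.fromBlocks_apply₂₂]
    · have a1 := (mem_filter.mp (Finset.orderEmbOfFin_mem (A.filter P) rfl i))
      have a2 := (mem_filter.mp (Finset.orderEmbOfFin_mem (B.filter fun x => ¬ Q x) h2 j))
      rw [Matrix.zero_apply]
      exact hY _ a1.1 _ a2.1 a1.2 a2.2

theorem mnr_empty (Y : Matrix α α R) : mnr Y ∅ ∅ = 1 := by
  rw [mnr_eq_det Y ∅ ∅ (k := 0) rfl rfl]
  simp

theorem mnr_one [DecidableEq α] (A B : Finset α) :
    mnr (1 : Matrix α α R) A B = if A = B then 1 else 0 := by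
  split_ifs with h
  · subst h
    rw [mnr_eq_det _ A A rfl rfl, Matrix.submatrix_one _ (A.orderEmbOfFin rfl).injective,
      Matrix.det_one]
  · by_cases hc : B.card = A.card
    swap
    · exact mnr_card_ne _ hc
    apply mnr_eq_zero _ A B (fun x => x ∉ B) (fun x => False)
    · intro a ha b hb h1 _
      apply Matrix.one_apply_ne
      rintro rfl
      exact h1 hb
    · have : ∃ x ∈ A, x ∉ B := by
        by_contra hcon
        push Not at hcon
        exact h (Finset.eq_of_subset_of_card_le hcon hc.le)
      obtain ⟨x, hx, hxB⟩ := this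
      simp only [filter_false, card_empty]
      exact Finset.card_pos.mpr ⟨x, by simp [hx, hxB]⟩

theorem det_mul_expand {α : Type*} [Fintype α] {k : ℕ} (P : Matrix (Fin k) α R) (Q : Matrix α (Fin k) R) :
    (P * Q).det = ∑ g : Fin k → α, (∏ i, P i (g i)) * (Q.submatrix g id).det := by
  have : (P * Q) = fun i => ∑ a, P i a • Q a := by
    ext i j
    simp [Matrix.mul_apply, Finset.sum_apply]
  rw [this]
  change (Matrix.detRowAlternating (R := R)).toMultilinearMap (fun i => ∑ a, P i a • Q a) = _
  rw [MultilinearMap.map_sum]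
  apply Finset.sum_congr rfl
  intro g _
  rw [MultilinearMap.map_smul_univ]
  rfl

theorem det_cauchyBinet [Fintype α] {k : ℕ} (P : Matrix (Fin k) α R) (Q : Matrix α (Fin k) R) :
    (P * Q).det = ∑ C : {C : Finset α // C.card = k},
      (P.submatrix id (C.1.orderEmbOfFin C.2)).det * (Q.submatrix (C.1.orderEmbOfFin C.2) id).det := by
  rw [det_mul_expand]
  have key : ∀ C : {C : Finset α // C.card = k},
      (P.submatrix id (C.1.orderEmbOfFin C.2)).det * (Q.submatrix (C.1.orderEmbOfFin C.2) id).det =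
      ∑ σ : Equiv.Perm (Fin k), (∏ i, P i (C.1.orderEmbOfFin C.2 (σ i))) *
        (Q.submatrix (fun i => C.1.orderEmbOfFin C.2 (σ i)) id).det := by
    intro C
    rw [← Matrix.det_transpose, Matrix.det_apply', Finset.sum_mul]
    apply Finset.sum_congr rfl
    intro σ _
    have := Matrix.det_permute σ (Q.submatrix (C.1.orderEmbOfFin C.2) id)
    have e : (Q.submatrix (fun i => C.1.orderEmbOfFin C.2 (σ i)) id) =
      (Q.submatrix (C.1.orderEmbOfFin C.2) id).submatrix σ id := rfl
    rw [e, this]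
    simp only [Matrix.transpose_apply, Matrix.submatrix_apply, id]
    ring
  simp_rw [key]
  rw [← Fintype.sum_sigma (fun x : (_ : {C : Finset α // C.card = k}) × Equiv.Perm (Fin k) =>
      (∏ i, P i (x.1.1.orderEmbOfFin x.1.2 (x.2 i))) *
        (Q.submatrix (fun i => x.1.1.orderEmbOfFin x.1.2 (x.2 i)) id).det)]
  symm
  apply Finset.sum_bij_ne_zero (fun x _ _ => fun i => x.1.1.orderEmbOfFin x.1.2 (x.2 i))
  · intros; simp
  · rintro ⟨⟨C, hC⟩, σ⟩ _ _ ⟨⟨C', hC'⟩, σ'⟩ _ _ heq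
    have hCC : C = C' := by
      have h1 : Set.range (fun i => C.orderEmbOfFin hC (σ i)) = C := by
        rw [← Finset.range_orderEmbOfFin C hC]
        exact σ.surjective.range_comp (C.orderEmbOfFin hC)
      have h2 : Set.range (fun i => C'.orderEmbOfFin hC' (σ' i)) = C' := by
        rw [← Finset.range_orderEmbOfFin C' hC']
        exact σ'.surjective.range_comp (C'.orderEmbOfFin hC')
      dsimp only at heq
      rw [heq, h2] at h1
      exact_mod_cast h1.symm
    subst hCC
    have : σ = σ' := by
      apply Equiv.ext
      intro i
      have := congrFun heq i
      simpa using this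
    rw [this]
  · intro g _ hg
    have hinj : Function.Injective g := by
      intro i j hij
      by_contra hne
      apply hg
      rw [Matrix.det_zero_of_row_eq hne (by ext x; simp [hij]), mul_zero]
    have hC : (univ.image g).card = k := by rw [card_image_of_injective _ hinj]; simp
    have hex : ∀ i, ∃ j, (univ.image g).orderEmbOfFin hC j = g i := by
      intro i
      have : g i ∈ Set.range ((univ.image g).orderEmbOfFin hC) := by simp
      exact this
    choose σ hσ using hex
    have hσi : Function.Injective σ := by
      intro i j hij
      apply hinj
      rw [← hσ i, ← hσ j, hij]
    refine ⟨⟨⟨univ.image g, hC⟩, Equiv.ofBijective σ (Finite.injective_iff_bijective.mp hσi)⟩,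
      mem_univ _, ?_, ?_⟩
    · simpa [hσ] using hg
    · funext i
      simp [hσ]
  · intros; rfl

theorem mnr_mul [Fintype α] (Y Z : Matrix α α R) (A B : Finset α) :
    mnr (Y * Z) A B = ∑ C : Finset α, mnr Y A C * mnr Z C B := by
  by_cases h : B.card = A.card
  · rw [mnr_eq_det _ A B rfl h]
    have : (Y * Z).submatrix (A.orderEmbOfFin rfl) (B.orderEmbOfFin h) =
      Y.submatrix (A.orderEmbOfFin rfl) id * Z.submatrix id (B.orderEmbOfFin h) := by
      rw [Matrix.submatrix_mul _ _ _ id _ Function.bijective_id]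
    rw [this, det_cauchyBinet]
    rw [← Finset.sum_filter_of_ne (s := univ) (p := fun C : Finset α => C.card = A.card)]
    · rw [Finset.sum_subtype (p := fun C : Finset α => C.card = A.card) _ (by simp)]
      apply Finset.sum_congr rfl
      rintro ⟨C, hC⟩ _
      rw [mnr_eq_det Y A C rfl hC, mnr_eq_det Z C B hC h]
      rfl
    · intro C _ hne
      by_contra hcon
      exact hne (by rw [mnr_card_ne Y hcon, zero_mul])
  · rw [mnr_card_ne _ h]
    symm
    apply Finset.sum_eq_zero
    intro C _
    by_cases hC : C.card = A.card
    · rw [mnr_card_ne Z (A := C), mul_zero]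
      omega
    · rw [mnr_card_ne Y hC, zero_mul]

end minors
set_option linter.unusedSectionVars false

section factor
variable {α : Type*} [LinearOrder α] [Fintype α] {R : Type*} [CommRing R]

def Sst (β : α → ℕ) (b : ℕ → ℕ) (k : ℕ) : Finset α :=
  univ.filter fun x => b k < β x ∧ β x < b (k + 1)

def Tn (β : α → ℕ) (b : ℕ → ℕ) (k : ℕ) : ℕ := ∑ j ∈ range k, (Sst β b j).card

open Classical in
def Uvec (Y : Matrix α α R) (β : α → ℕ) (b : ℕ → ℕ) : ℕ → Finset α → R
  | 0, A => if A = ∅ then 1 else 0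
  | k + 1, A => if Sst β b k ⊆ A ∧ (∀ x ∈ A, x ∉ Sst β b k → β x ≤ b k) then
      ∑ B : Finset α, mnr Y (A \ Sst β b k) B * Uvec Y β b k B else 0

open Classical in
def Pvec (Y : Matrix α α R) (β : α → ℕ) (b : ℕ → ℕ) : ℕ → Finset α → R
  | 0, E => if E = univ.filter (fun x => β x = b 0) then 1 else 0
  | k + 1, E => ∑ E' : Finset α, if (∀ x ∈ E', β x = b k) then
      mnr Y (Sst β b k ∪ E) (E' ∪ Sst β b k) * Pvec Y β b k E' else 0

open Classical in
def Vvec (Y : Matrix α α R) (β : α → ℕ) (b : ℕ → ℕ) (J : Finset α) : ℕ → Finset α → R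
  | 0, B => if univ.filter (fun x => β x = b 0) ∪ B = J then 1 else 0
  | k + 1, B => ∑ B' : Finset α, if (∀ x ∈ B', b (k + 1) ≤ β x) then
      mnr Y B B' * Vvec Y β b J k (Sst β b k ∪ B') else 0

theorem mem_Sst {β : α → ℕ} {b : ℕ → ℕ} {k : ℕ} {x : α} :
    x ∈ Sst β b k ↔ b k < β x ∧ β x < b (k + 1) := by simp [Sst]

theorem Uvec_supp (Y : Matrix α α R) (β : α → ℕ) (b : ℕ → ℕ) (k : ℕ)
    (hb : ∀ j < k, b j < b (j + 1)) (A : Finset α)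
    (h : Uvec Y β b k A ≠ 0) : (∀ x ∈ A, β x < b k) ∧ A.card = Tn β b k := by
  induction k generalizing A with
  | zero =>
    simp only [Uvec, ne_eq, ite_eq_right_iff, not_forall] at h
    obtain ⟨h, _⟩ := h
    subst h
    simp [Tn]
  | succ k ih =>
    simp only [Uvec, ne_eq, ite_eq_right_iff, not_forall] at h
    obtain ⟨⟨h1, h2⟩, h3⟩ := h
    obtain ⟨B, _, hB⟩ := Finset.exists_ne_zero_of_sum_ne_zero h3
    have hm := left_ne_zero_of_mul hB
    have hU := right_ne_zero_of_mul hB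
    obtain ⟨i1, i2⟩ := ih (fun j hj => hb j (by omega)) B hU
    have hc : B.card = (A \ Sst β b k).card := by
      by_contra hcon
      exact hm (mnr_card_ne _ hcon)
    constructor
    · intro x hx
      by_cases hS : x ∈ Sst β b k
      · exact (mem_Sst.mp hS).2
      · have := h2 x hx hS
        have := hb k (by omega)
        omega
    · rw [Tn, sum_range_succ, ← Tn, ← i2, hc, Finset.card_sdiff_add_card_eq_card h1]

theorem Pvec_supp (Y : Matrix α α R) (β : α → ℕ) (b : ℕ → ℕ) (k : ℕ)
    (E : Finset α) (hE : ∀ x ∈ E, β x = b k)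
    (h : Pvec Y β b k E ≠ 0) : E.card = (univ.filter (fun x => β x = b 0)).card := by
  induction k generalizing E with
  | zero =>
    simp only [Pvec, ne_eq, ite_eq_right_iff, not_forall] at h
    obtain ⟨h, _⟩ := h
    rw [h]
  | succ k ih =>
    simp only [Pvec] at h
    obtain ⟨E', _, hB⟩ := Finset.exists_ne_zero_of_sum_ne_zero h
    simp only [ne_eq, ite_eq_right_iff, not_forall] at hB
    obtain ⟨h1, hB⟩ := hB
    have hm := left_ne_zero_of_mul hB
    have hU := right_ne_zero_of_mul hB
    have i1 := ih E' h1 hU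
    have hc : (E' ∪ Sst β b k).card = (Sst β b k ∪ E).card := by
      by_contra hcon
      exact hm (mnr_card_ne _ hcon)
    rw [card_union_of_disjoint, card_union_of_disjoint] at hc
    · omega
    · rw [disjoint_left]
      intro x hx hx'
      have := mem_Sst.mp hx
      have := hE x hx'
      omega
    · rw [disjoint_left]
      intro x hx' hx
      have := mem_Sst.mp hx
      have := h1 x hx'
      omega

theorem card_lt_split (β : α → ℕ) (b : ℕ → ℕ) (k : ℕ) (hb : b k < b (k + 1)) (C : Finset α) :
    (C.filter fun x => β x < b (k + 1)).card =
      (C.filter fun x => β x ≤ b k).card + (C ∩ Sst β b k).card := by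
  rw [← card_union_of_disjoint]
  · congr 1
    ext x
    simp only [mem_filter, mem_union, mem_inter, mem_Sst]
    have : β x ≤ b k ∨ b k < β x := le_or_gt _ _
    constructor
    · rintro ⟨h1, h2⟩; rcases this with h | h
      · exact Or.inl ⟨h1, h⟩
      · exact Or.inr ⟨h1, h, h2⟩
    · rintro (⟨h1, h2⟩ | ⟨h1, h2, h3⟩)
      · exact ⟨h1, by omega⟩
      · exact ⟨h1, h3⟩
  · rw [disjoint_left]
    intro x hx hx'
    simp only [mem_filter, mem_inter, mem_Sst] at hx hx'
    omega

theorem card_le_split (β : α → ℕ) (i : ℕ) (C : Finset α) :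
    (C.filter fun x => β x ≤ i).card =
      (C.filter fun x => β x < i).card + (C.filter fun x => β x = i).card := by
  rw [← card_union_of_disjoint]
  · congr 1
    ext x
    simp only [mem_filter, mem_union]
    have : β x ≤ i ↔ β x < i ∨ β x = i := le_iff_lt_or_eq
    tauto
  · rw [disjoint_left]
    intro x hx hx'
    simp only [mem_filter] at hx hx'
    omega

theorem mnr_level (Y : Matrix α α R) (β : α → ℕ) (hY : ∀ a b, ¬ β b < β a → Y a b = 0)
    (A B : Finset α) (h : mnr Y A B ≠ 0) (i : ℕ) :
    (A.filter fun x => β x ≤ i).card ≤ (B.filter fun x => β x < i).card := by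
  by_contra hcon
  apply h
  apply mnr_eq_zero Y A B (fun x => β x ≤ i) (fun x => β x < i)
  · intro a _ b _ h1 h2
    exact hY _ _ (by omega)
  · omega

theorem mnr_split_level (Y : Matrix α α R) (β : α → ℕ) (hβ : Monotone β)
    (hY : ∀ a b, ¬ β b < β a → Y a b = 0)
    (A B A1 A2 B1 B2 : Finset α) (i : ℕ) (hA : A = A1 ∪ A2) (hB : B = B1 ∪ B2)
    (hA1 : ∀ x ∈ A1, β x ≤ i) (hA2 : ∀ x ∈ A2, i < β x)
    (hB1 : ∀ x ∈ B1, β x < i) (hB2 : ∀ x ∈ B2, i ≤ β x)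
    (h : B1.card = A1.card) :
    mnr Y A B = mnr Y A1 B1 * mnr Y A2 B2 := by
  have e1 : A.filter (fun x => β x ≤ i) = A1 := by
    ext x; subst hA; simp only [mem_filter, mem_union]
    have := hA1 x; have := hA2 x
    constructor
    · rintro ⟨h | h, h'⟩
      · exact h
      · have := hA2 x h; omega
    · intro h; exact ⟨Or.inl h, hA1 x h⟩
  have e2 : A.filter (fun x => ¬ β x ≤ i) = A2 := by
    ext x; subst hA; simp only [mem_filter, mem_union]
    constructor
    · rintro ⟨h | h, h'⟩
      · exact absurd (hA1 x h) h'
      · exact h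
    · intro h; exact ⟨Or.inr h, by have := hA2 x h; omega⟩
  have e3 : B.filter (fun x => β x < i) = B1 := by
    ext x; subst hB; simp only [mem_filter, mem_union]
    constructor
    · rintro ⟨h | h, h'⟩
      · exact h
      · have := hB2 x h; omega
    · intro h; exact ⟨Or.inl h, hB1 x h⟩
  have e4 : B.filter (fun x => ¬ β x < i) = B2 := by
    ext x; subst hB; simp only [mem_filter, mem_union]
    constructor
    · rintro ⟨h | h, h'⟩
      · exact absurd (hB1 x h) h'
      · exact h
    · intro h; exact ⟨Or.inr h, by have := hB2 x h; omega⟩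
  rw [mnr_split Y A B (fun x => β x ≤ i) (fun x => β x < i), e1, e2, e3, e4]
  · intro x _ y _ h1 h2
    by_contra hcon
    have := hβ (not_lt.mp hcon)
    omega
  · intro x _ y _ h1 h2
    by_contra hcon
    have := hβ (not_lt.mp hcon)
    omega
  · intro a _ b _ h1 h2
    exact hY _ _ (by omega)
  · rw [e1, e3, h]

theorem main_factor (Y : Matrix α α R) (β : α → ℕ) (hβ : Monotone β)
    (hY : ∀ a b, ¬ β b < β a → Y a b = 0) (b : ℕ → ℕ) (hb0 : ∀ x, b 0 ≤ β x)
    (c : ℕ) (hc : (univ.filter (fun x : α => β x = b 0)).card = c) (J : Finset α) (k : ℕ)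
    (hb : ∀ j < k, b j < b (j + 1)) :
    (∀ C : Finset α, Tn β b k < (C.filter fun x => β x < b k).card → mnr (Y ^ k) C J = 0) ∧
    (∀ C : Finset α, c + Tn β b k < (C.filter fun x => β x ≤ b k).card → mnr (Y ^ k) C J = 0) ∧
    (∀ C : Finset α, (C.filter fun x => β x < b k).card = Tn β b k →
      (C.filter fun x => β x = b k).card = c →
      mnr (Y ^ k) C J = Uvec Y β b k (C.filter fun x => β x < b k) *
        Pvec Y β b k (C.filter fun x => β x = b k) *
        Vvec Y β b J k (C.filter fun x => b k < β x)) := by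
  classical
  induction k with
  | zero =>
    have hz : ∀ C : Finset α, (C.filter fun x => β x < b 0) = ∅ := by
      intro C
      rw [filter_eq_empty_iff]
      intro x _
      have := hb0 x
      omega
    refine ⟨?_, ?_, ?_⟩
    · intro C h
      rw [hz] at h
      simp at h
    · intro C h
      exfalso
      rw [card_le_split, hz] at h
      have : (C.filter fun x => β x = b 0).card ≤ c := by
        rw [← hc]
        exact card_le_card (filter_subset_filter _ (subset_univ _))
      simp at h
      omega
    · intro C h1 h2
      have hE : (C.filter fun x => β x = b 0) = univ.filter (fun x : α => β x = b 0) := by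
        apply Finset.eq_of_subset_of_card_le (filter_subset_filter _ (subset_univ _))
        omega
      rw [hz, pow_zero, mnr_one]
      simp only [Uvec, Pvec, Vvec, if_true, hE, one_mul]
      rw [← hE]
      congr 1
      have : (C.filter fun x => β x = b 0) ∪ (C.filter fun x => b 0 < β x) = C := by
        rw [← filter_or]
        apply filter_true_of_mem
        intro x _
        have := hb0 x
        omega
      rw [this]
  | succ k ih =>
    obtain ⟨ih1, ih2, ih3⟩ := ih (fun j hj => hb j (by omega))
    have hbk := hb k (by omega)
    have hT : Tn β b (k + 1) = Tn β b k + (Sst β b k).card := by rw [Tn, sum_range_succ, ← Tn]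
    have hint : ∀ C : Finset α, (C ∩ Sst β b k).card ≤ (Sst β b k).card :=
      fun C => card_le_card inter_subset_right
    refine ⟨?_, ?_, ?_⟩
    · intro C' h
      rw [pow_succ', mnr_mul]
      apply Finset.sum_eq_zero
      intro C _
      by_cases hm : mnr Y C' C = 0
      · rw [hm, zero_mul]
      · rw [ih1 C, mul_zero]
        have := mnr_level Y β hY C' C hm (b k)
        have := card_lt_split β b k hbk C'
        have := hint C'
        omega
    · intro C' h
      rw [pow_succ', mnr_mul]
      apply Finset.sum_eq_zero
      intro C _
      by_cases hm : mnr Y C' C = 0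
      · rw [hm, zero_mul]
      · rw [ih2 C, mul_zero]
        have := mnr_level Y β hY C' C hm (b (k + 1))
        have := card_lt_split β b k hbk C
        have := hint C
        omega
    · intro C' h1 h2
      set S := Sst β b k with hS
      set L' := C'.filter fun x => β x < b (k + 1) with hL'
      set E' := C'.filter fun x => β x = b (k + 1) with hE'
      set R' := C'.filter fun x => b (k + 1) < β x with hR'
      have hmemS : ∀ x, x ∈ S ↔ b k < β x ∧ β x < b (k + 1) := fun x => mem_Sst
      have tight : ∀ C, mnr Y C' C * mnr (Y ^ k) C J ≠ 0 → S ⊆ C' ∧ S ⊆ C ∧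
          (C.filter fun x => β x < b k).card = Tn β b k ∧
          (C.filter fun x => β x = b k).card = c := by
        intro C hne
        have hm := left_ne_zero_of_mul hne
        have hy := right_ne_zero_of_mul hne
        have a1 : (C.filter fun x => β x < b k).card ≤ Tn β b k := by
          by_contra hcon; exact hy (ih1 C (by omega))
        have a2 : (C.filter fun x => β x ≤ b k).card ≤ c + Tn β b k := by
          by_contra hcon; exact hy (ih2 C (by omega))
        have n1 := mnr_level Y β hY C' C hm (b k)
        have n2 := mnr_level Y β hY C' C hm (b (k + 1))
        have s1 := card_lt_split β b k hbk C'
        have s2 := card_lt_split β b k hbk C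
        have s3 := card_le_split β (b (k + 1)) C'
        have s4 := card_le_split β (b k) C
        have t1 := hint C
        have t2 := hint C'
        rw [← hL', ← hS] at s1
        rw [← hS] at s2
        rw [← hL', ← hE'] at s3
        refine ⟨?_, ?_, ?_, ?_⟩
        · rw [← inter_eq_right]
          apply Finset.eq_of_subset_of_card_le inter_subset_right
          omega
        · rw [← inter_eq_right]
          apply Finset.eq_of_subset_of_card_le inter_subset_right
          omega
        · omega
        · omega
      rw [pow_succ', mnr_mul]
      by_cases hSC : S ⊆ C'
      swap
      · have hU : Uvec Y β b (k + 1) L' = 0 := by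
          simp only [Uvec]
          rw [if_neg]
          rintro ⟨h, _⟩
          exact hSC (h.trans (filter_subset _ _))
        rw [hU, zero_mul, zero_mul]
        apply Finset.sum_eq_zero
        intro C _
        by_contra hne
        exact hSC (tight C hne).1
      have hSL : S ⊆ L' := by
        intro x hx
        rw [hL', mem_filter]
        exact ⟨hSC hx, ((hmemS x).mp hx).2⟩
      have hU : Uvec Y β b (k + 1) L' = ∑ B : Finset α, mnr Y (L' \ S) B * Uvec Y β b k B := by
        rw [Uvec, if_pos]
        refine ⟨hSL, ?_⟩
        intro x hx hxS
        rw [← hS, hmemS] at hxS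
        have := (mem_filter.mp hx).2
        omega
      rw [hU, Pvec, Vvec, sum_mul_sum, ← Fintype.sum_prod_type', sum_mul_sum,
        ← Fintype.sum_prod_type']
      rw [← hS]
      -- equality on good triples
      have good : ∀ L E B : Finset α, (∀ x ∈ L, β x < b k) → L.card = Tn β b k →
          (∀ x ∈ E, β x = b k) → E.card = c → (∀ x ∈ B, b (k + 1) ≤ β x) →
          mnr Y (L' \ S) L * Uvec Y β b k L * (mnr Y (S ∪ E') (E ∪ S) * Pvec Y β b k E) *
            (mnr Y R' B * Vvec Y β b J k (S ∪ B)) =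
          mnr Y C' (L ∪ E ∪ S ∪ B) * mnr (Y ^ k) (L ∪ E ∪ S ∪ B) J := by
        intro L E B hL hLc hE hEc hB
        have f1 : (L ∪ E ∪ S ∪ B).filter (fun x => β x < b k) = L := by
          ext x
          have := hL x; have := hE x; have := hB x; have := hmemS x
          simp only [mem_filter, mem_union]
          grind
        have f2 : (L ∪ E ∪ S ∪ B).filter (fun x => β x = b k) = E := by
          ext x
          have := hL x; have := hE x; have := hB x; have := hmemS x
          simp only [mem_filter, mem_union]
          grind
        have f3 : (L ∪ E ∪ S ∪ B).filter (fun x => b k < β x) = S ∪ B := by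
          ext x
          have := hL x; have := hE x; have := hB x; have := hmemS x
          simp only [mem_filter, mem_union]
          grind
        have e := ih3 (L ∪ E ∪ S ∪ B) (by rw [f1, hLc]) (by rw [f2, hEc])
        rw [f1, f2, f3] at e
        rw [e]
        have hLS : (L' \ S).card = Tn β b k := by
          rw [card_sdiff_of_subset hSL]; omega
        have q1 : mnr Y C' (L ∪ E ∪ S ∪ B) = mnr Y (L' \ S) L * mnr Y (S ∪ E' ∪ R') (E ∪ S ∪ B) := by
          apply mnr_split_level Y β hβ hY _ _ _ _ _ _ (b k)
          · ext x
            have := hmemS x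
            have := @hSC x
            simp only [mem_union, mem_sdiff, hL', hE', hR', mem_filter]
            grind
          · simp only [union_assoc]
          · intro x hx
            rw [mem_sdiff, hmemS, hL', mem_filter] at hx
            omega
          · intro x hx
            have := hmemS x
            simp only [mem_union, hE', hR', mem_filter] at hx
            grind
          · exact hL
          · intro x hx
            have := hE x; have := hB x; have := hmemS x
            simp only [mem_union] at hx
            grind
          · omega
        have q2 : mnr Y (S ∪ E' ∪ R') (E ∪ S ∪ B) = mnr Y (S ∪ E') (E ∪ S) * mnr Y R' B := by
          apply mnr_split_level Y β hβ hY _ _ _ _ _ _ (b (k + 1)) rfl rfl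
          · intro x hx
            have := hmemS x
            simp only [mem_union, hE', mem_filter] at hx
            grind
          · intro x hx
            rw [hR', mem_filter] at hx
            exact hx.2
          · intro x hx
            have := hE x; have := hB x; have := hmemS x
            simp only [mem_union] at hx
            grind
          · exact hB
          · rw [card_union_of_disjoint, card_union_of_disjoint]
            · omega
            · rw [disjoint_left]
              intro x hx hx'
              rw [hmemS] at hx
              rw [hE', mem_filter] at hx'
              omega
            · rw [disjoint_left]
              intro x hx' hx
              rw [hmemS] at hx
              have := hE x hx'
              omega
        rw [q1, q2]
        ring
      symm
      refine Finset.sum_bij_ne_zero (fun t _ _ => t.1.1 ∪ t.1.2 ∪ S ∪ t.2) ?_ ?_ ?_ ?_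
      · intros; simp
      · rintro ⟨⟨L, E⟩, B⟩ _ hne ⟨⟨L2, E2⟩, B2⟩ _ hne2 heq
        have supp : ∀ L E B : Finset α,
          mnr Y (L' \ S) L * Uvec Y β b k L *
            (if ∀ x ∈ E, β x = b k then mnr Y (S ∪ E') (E ∪ S) * Pvec Y β b k E else 0) *
            (if ∀ x ∈ B, b (k + 1) ≤ β x then mnr Y R' B * Vvec Y β b J k (S ∪ B) else 0) ≠ 0 →
            (∀ x ∈ L, β x < b k) ∧ (∀ x ∈ E, β x = b k) ∧ (∀ x ∈ B, b (k + 1) ≤ β x) := by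
          intro L E B h
          have h3 := right_ne_zero_of_mul h
          have h2 := right_ne_zero_of_mul (left_ne_zero_of_mul h)
          have h1 := right_ne_zero_of_mul (left_ne_zero_of_mul (left_ne_zero_of_mul h))
          refine ⟨(Uvec_supp Y β b k (fun j hj => hb j (by omega)) L h1).1, ?_, ?_⟩
          · by_contra hcon; exact h2 (if_neg hcon)
          · by_contra hcon; exact h3 (if_neg hcon)
        obtain ⟨a1, a2, a3⟩ := supp L E B hne
        obtain ⟨b1, b2, b3⟩ := supp L2 E2 B2 hne2
        simp only at heq
        have hx : ∀ x, (x ∈ L ↔ x ∈ L2) ∧ (x ∈ E ↔ x ∈ E2) ∧ (x ∈ B ↔ x ∈ B2) := by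
          intro x
          have h := Finset.ext_iff.mp heq x
          simp only [mem_union] at h
          have := a1 x; have := a2 x; have := a3 x
          have := b1 x; have := b2 x; have := b3 x; have := hmemS x
          grind
        have e1 : L = L2 := by ext x; exact (hx x).1
        have e2 : E = E2 := by ext x; exact (hx x).2.1
        have e3 : B = B2 := by ext x; exact (hx x).2.2
        rw [e1, e2, e3]
      · intro C _ hne
        obtain ⟨t1, t2, t3, t4⟩ := tight C hne
        have hC : C.filter (fun x => β x < b k) ∪ C.filter (fun x => β x = b k) ∪ S ∪
            C.filter (fun x => b (k + 1) ≤ β x) = C := by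
          ext x
          have := @t2 x
          have := hmemS x
          simp only [mem_union, mem_filter]
          grind
        have g := good (C.filter (fun x => β x < b k)) (C.filter (fun x => β x = b k))
          (C.filter (fun x => b (k + 1) ≤ β x)) (fun x hx => (mem_filter.mp hx).2) t3
          (fun x hx => (mem_filter.mp hx).2) t4 (fun x hx => (mem_filter.mp hx).2)
        refine ⟨((C.filter (fun x => β x < b k), C.filter (fun x => β x = b k)),
          C.filter (fun x => b (k + 1) ≤ β x)), mem_univ _, ?_, hC⟩
        simp only
        rw [if_pos (fun x hx => (mem_filter.mp hx).2), if_pos (fun x hx => (mem_filter.mp hx).2),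
          g, hC]
        exact hne
      · rintro ⟨⟨L, E⟩, B⟩ _ hne
        simp only at hne ⊢
        have h3 := right_ne_zero_of_mul hne
        have h2 := right_ne_zero_of_mul (left_ne_zero_of_mul hne)
        have h1 := right_ne_zero_of_mul (left_ne_zero_of_mul (left_ne_zero_of_mul hne))
        obtain ⟨u1, u2⟩ := Uvec_supp Y β b k (fun j hj => hb j (by omega)) L h1
        have p1 : ∀ x ∈ E, β x = b k := by
          by_contra hcon; exact h2 (if_neg hcon)
        have p2 : ∀ x ∈ B, b (k + 1) ≤ β x := by
          by_contra hcon; exact h3 (if_neg hcon)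
        rw [if_pos p1] at h2 ⊢
        rw [if_pos p2]
        have p3 := Pvec_supp Y β b k E p1 (right_ne_zero_of_mul h2)
        exact good L E B u1 u2 p1 (by omega) p2

end factor
set_option linter.unusedSectionVars false

section dual
variable {α : Type*} [LinearOrder α] [Fintype α] {R : Type*} [CommRing R]

theorem V_pair (Y : Matrix α α R) (β β' : α → ℕ) (b b' : ℕ → ℕ) (N : ℕ) (J : Finset α)
    (hS : ∀ j < N, Sst β' b' j = Sst β b (N - 1 - j))
    (hle : ∀ j < N, ∀ x, β' x ≤ b' j ↔ b (N - j) ≤ β x)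
    (j : ℕ) (hj : j ≤ N) :
    Vvec Y β b J N ∅ = ∑ B : Finset α, Uvec Y.transpose β' b' j B * Vvec Y β b J (N - j) B := by
  classical
  induction j with
  | zero =>
    simp [Uvec]
  | succ j ih =>
    rw [ih (by omega)]
    obtain ⟨k, hk⟩ : ∃ k, N - j = k + 1 := ⟨N - j - 1, by omega⟩
    have hk' : N - (j + 1) = k := by omega
    have hk2 : N - 1 - j = k := by omega
    have hSj := hS j (by omega)
    have hlej := hle j (by omega)
    rw [hk2] at hSj
    rw [hk] at hlej
    rw [hk, hk']
    simp only [Uvec, Vvec, hSj, hlej]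
    simp only [mul_sum, mnr_transpose]
    rw [sum_comm]
    simp only [ite_mul, zero_mul, mul_ite, mul_zero]
    have e1 : ∀ B' : Finset α, (∑ B : Finset α, if ∀ x ∈ B', b (k + 1) ≤ β x then
        Uvec Y.transpose β' b' j B * (mnr Y B B' * Vvec Y β b J k (Sst β b k ∪ B')) else 0) =
        if ∀ x ∈ B', b (k + 1) ≤ β x then (∑ B : Finset α, 
        Uvec Y.transpose β' b' j B * (mnr Y B B' * Vvec Y β b J k (Sst β b k ∪ B'))) else 0 := by
      intro B'
      split_ifs
      · rfl
      · simp
    rw [sum_congr rfl (fun B' _ => e1 B'), ← sum_filter, ← sum_filter]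
    refine Finset.sum_bij' (fun B' _ => Sst β b k ∪ B') (fun A _ => A \ Sst β b k) ?_ ?_ ?_ ?_ ?_
    · intro B' h
      simp only [mem_filter, mem_univ, true_and] at h ⊢
      refine ⟨subset_union_left, ?_⟩
      intro x hx hx'
      rcases mem_union.mp hx with h1 | h1
      · exact absurd h1 hx'
      · exact h x h1
    · intro A h
      simp only [mem_filter, mem_univ, true_and] at h ⊢
      intro x hx
      rw [mem_sdiff] at hx
      exact h.2 x hx.1 hx.2
    · intro B' h
      simp only [mem_filter, mem_univ, true_and] at h
      ext x
      simp only [mem_sdiff, mem_union]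
      constructor
      · tauto
      · intro hx
        refine ⟨Or.inr hx, fun h' => ?_⟩
        have := h x hx
        have := (mem_Sst.mp h').2
        omega
    · intro A h
      simp only [mem_filter, mem_univ, true_and] at h
      rw [union_sdiff_of_subset h.1]
    · intro B' h
      simp only [mem_filter, mem_univ, true_and] at h
      have : (Sst β b k ∪ B') \ Sst β b k = B' := by
        ext x
        simp only [mem_sdiff, mem_union]
        constructor
        · tauto
        · intro hx
          refine ⟨Or.inr hx, fun h' => ?_⟩
          have := h x hx
          have := (mem_Sst.mp h').2
          omega
      rw [this, sum_mul]
      apply sum_congr rfl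
      intro B _
      ring

theorem V_dual (Y : Matrix α α R) (β β' : α → ℕ) (b b' : ℕ → ℕ) (N : ℕ) (B : Finset α)
    (hS : ∀ j < N, Sst β' b' j = Sst β b (N - 1 - j))
    (hle : ∀ j < N, ∀ x, β' x ≤ b' j ↔ b (N - j) ≤ β x)
    (hb' : ∀ j < N, b' j < b' (j + 1))
    (hlt : ∀ x, β' x < b' N → b 0 < β x)
    (hB : Uvec Y.transpose β' b' N B ≠ 0) :
    Vvec Y β b (univ.filter (fun x => β x = b 0) ∪ B) N ∅ = Uvec Y.transpose β' b' N B := by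
  classical
  rw [V_pair Y β β' b b' N _ hS hle N le_rfl, Nat.sub_self]
  have key : ∀ B, Uvec Y.transpose β' b' N B ≠ 0 →
      (univ.filter (fun x => β x = b 0) ∪ B) \ univ.filter (fun x => β x = b 0) = B := by
    intro B hB
    ext x
    simp only [mem_sdiff, mem_union, mem_filter, mem_univ, true_and]
    constructor
    · tauto
    · intro hx
      have := hlt x ((Uvec_supp _ _ _ _ hb' _ hB).1 x hx)
      exact ⟨Or.inr hx, by omega⟩
  rw [sum_eq_single B]
  · simp [Vvec]
  · intro B' _ hne
    by_cases h0 : Uvec Y.transpose β' b' N B' = 0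
    · rw [h0, zero_mul]
    · simp only [Vvec]
      rw [if_neg, mul_zero]
      intro h
      apply hne
      rw [← key B hB, ← key B' h0, h]
  · simp

end dual
set_option linter.unusedSectionVars false

section fident

theorem coeff_diag {ι : Type*} [Fintype ι] [DecidableEq ι] {R : Type*} [CommRing R]
    (N : Matrix ι ι R) (T : Finset ι) (d : ℕ) :
    (Matrix.det (N.map Polynomial.C +
      Matrix.diagonal (fun i => if i ∈ T then (Polynomial.X : Polynomial R) else 0))).coeff d =
    ∑ s : Finset ι, if sᶜ ⊆ T ∧ sᶜ.card = d then
      (N.submatrix (Subtype.val : s → ι) (Subtype.val : s → ι)).det else 0 := by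
  have h1 : Matrix.det (N.map Polynomial.C +
      Matrix.diagonal (fun i => if i ∈ T then (Polynomial.X : Polynomial R) else 0)) =
      ∑ s : Finset ι, (∏ i, if i ∈ s then (1 : Polynomial R) else
        (if i ∈ T then (Polynomial.X : Polynomial R) else 0)) *
        Polynomial.C (N.submatrix (Subtype.val : s → ι) (Subtype.val : s → ι)).det := by
    change Matrix.detRowAlternating.toMultilinearMap ((fun i => (N.map Polynomial.C) i) + fun i =>
      Matrix.diagonal (fun i => if i ∈ T then (Polynomial.X : Polynomial R) else 0) i) = _
    rw [MultilinearMap.map_add_univ]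
    apply sum_congr rfl
    intro s _
    have h2 : s.piecewise (fun i => (N.map Polynomial.C) i) (fun i =>
        Matrix.diagonal (fun i => if i ∈ T then (Polynomial.X : Polynomial R) else 0) i) =
        fun i => (if i ∈ s then (1 : Polynomial R) else
          (if i ∈ T then (Polynomial.X : Polynomial R) else 0)) •
          s.piecewise (fun i => (N.map Polynomial.C) i) (fun i => (1 : Matrix ι ι _) i) i := by
      funext i
      by_cases hi : i ∈ s
      · simp [hi]
      · funext j
        by_cases hij : i = j
        · subst hij; simp [hi]
        · simp [hi, hij]
    rw [h2, MultilinearMap.map_smul_univ, smul_eq_mul]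
    congr 1
    rw [← Matrix.det_piecewise_one_eq_submatrix_det, RingHom.map_det]
    change Matrix.det _ = _
    congr 1
    ext i j
    by_cases hi : i ∈ s
    · simp [hi, Finset.piecewise]
    · simp [hi, Finset.piecewise, Matrix.one_apply]
  rw [h1, Polynomial.finsetSum_coeff]
  apply sum_congr rfl
  intro s _
  by_cases hs : sᶜ ⊆ T
  · have : (∏ i, if i ∈ s then (1 : Polynomial R) else
        (if i ∈ T then (Polynomial.X : Polynomial R) else 0)) = Polynomial.X ^ sᶜ.card := by
      rw [← prod_const, ← prod_subset (subset_univ sᶜ)]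
      · apply prod_congr rfl
        intro i hi
        rw [if_neg (mem_compl.mp hi), if_pos (hs hi)]
      · intro i _ hi
        rw [mem_compl, not_not] at hi
        rw [if_pos hi]
    rw [this, Polynomial.coeff_X_pow_mul', Polynomial.coeff_C]
    by_cases hd : sᶜ.card = d
    · simp [hs, hd]
    · have hn : ¬ (sᶜ ⊆ T ∧ sᶜ.card = d) := fun h => hd h.2
      rw [if_neg hn]
      split_ifs with a a2
      · omega
      · rfl
      · rfl
  · obtain ⟨i, hi, hi'⟩ := Finset.not_subset.mp hs
    rw [prod_eq_zero (mem_univ i), zero_mul, if_neg (fun h => hs h.1), Polynomial.coeff_zero]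
    rw [if_neg (mem_compl.mp hi), if_neg hi']

section
variable {α : Type*} [LinearOrder α] [Fintype α] {R : Type*} [CommRing R]

def goodQ (β : α → ℕ) (b : ℕ → ℕ) (c k : ℕ) (Q : Finset α) : Prop :=
  (∀ x ∈ Q, β x < b k) ∧ ∀ j < k, Sst β b j ⊆ Q ∧ (Q.filter fun x => β x = b j).card = c

theorem bmono (b : ℕ → ℕ) (k : ℕ) (hb : ∀ j < k, b j < b (j + 1)) (i j : ℕ) (hij : i < j)
    (hj : j ≤ k) : b i < b j := by
  induction j with
  | zero => omega
  | succ j ih =>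
    have := hb j (by omega)
    rcases Nat.lt_succ_iff_lt_or_eq.mp hij with h | h
    · have := ih h (by omega); omega
    · subst h; omega

open Classical in
theorem Pvec_formula (Y : Matrix α α R) (β : α → ℕ) (hβ : Monotone β)
    (hY : ∀ a b, ¬ β b < β a → Y a b = 0) (b : ℕ → ℕ) (hb0 : ∀ x, b 0 ≤ β x)
    (c : ℕ) (hc : (univ.filter (fun x : α => β x = b 0)).card = c) (k : ℕ)
    (hb : ∀ j < k, b j < b (j + 1)) (E : Finset α) (hE : ∀ x ∈ E, β x = b k) (hEc : E.card = c) :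
    Pvec Y β b k E = ∑ Q : Finset α, if goodQ β b c k Q then
      mnr Y ((Q ∪ E) \ univ.filter (fun x => β x = b 0)) Q else 0 := by
  set V1 := univ.filter (fun x => β x = b 0) with hV1
  induction k generalizing E with
  | zero =>
    have e : E = V1 := by
      apply Finset.eq_of_subset_of_card_le
      · intro x hx; simp [hV1, hE x hx]
      · omega
    rw [sum_eq_single ∅]
    · rw [if_pos]
      · simp [Pvec, e, mnr_empty, ← hV1]
      · simp [goodQ]
    · intro Q _ hQ
      rw [if_neg]
      rintro ⟨h, _⟩
      obtain ⟨x, hx⟩ := nonempty_iff_ne_empty.mpr hQ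
      have := h x hx
      have := hb0 x
      omega
    · simp
  | succ k ih =>
    have hbk := hb k (by omega)
    have hb' : ∀ j < k, b j < b (j + 1) := fun j hj => hb j (by omega)
    simp only [Pvec]
    have e1 : ∀ E' : Finset α, (if ∀ x ∈ E', β x = b k then
        mnr Y (Sst β b k ∪ E) (E' ∪ Sst β b k) * Pvec Y β b k E' else 0) =
        ∑ Q' : Finset α, if ((∀ x ∈ E', β x = b k) ∧ E'.card = c ∧ goodQ β b c k Q') then
          mnr Y (((Q' ∪ E' ∪ Sst β b k) ∪ E) \ V1) (Q' ∪ E' ∪ Sst β b k) else 0 := by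
      intro E'
      by_cases h1 : ∀ x ∈ E', β x = b k
      swap
      · rw [if_neg h1]; symm; apply sum_eq_zero; intro Q' _; rw [if_neg]; tauto
      rw [if_pos h1]
      have dS : ∀ F : Finset α, (∀ x ∈ F, β x = b k ∨ β x = b (k + 1)) →
          Disjoint F (Sst β b k) := by
        intro F hF
        rw [disjoint_left]
        intro x hx hx'
        have := mem_Sst.mp hx'
        have := hF x hx
        omega
      by_cases h2 : E'.card = c
      swap
      · rw [mnr_card_ne, zero_mul]
        · symm; apply sum_eq_zero; intro Q' _; rw [if_neg]; tauto
        · rw [card_union_of_disjoint (dS _ fun x hx => Or.inl (h1 x hx)),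
            card_union_of_disjoint (dS _ fun x hx => Or.inr (hE x hx)).symm]
          omega
      rw [ih hb' E' h1 h2, mul_sum]
      apply sum_congr rfl
      intro Q' _
      by_cases h3 : goodQ β b c k Q'
      swap
      · rw [if_neg h3, if_neg, mul_zero]; tauto
      rw [if_pos h3, if_pos ⟨h1, h2, h3⟩]
      have hV : V1 ⊆ Q' ∪ E' := by
        rcases Nat.eq_zero_or_pos k with h0 | h0
        · subst h0
          have : E' = V1 := by
            apply Finset.eq_of_subset_of_card_le
            · intro x hx; simp [hV1, h1 x hx]
            · omega
          rw [this]; exact subset_union_right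
        · have := (h3.2 0 h0).2
          have : Q'.filter (fun x => β x = b 0) = V1 := by
            apply Finset.eq_of_subset_of_card_le
            · exact filter_subset_filter _ (subset_univ _)
            · omega
          rw [← this]
          exact (filter_subset _ _).trans subset_union_left
      have hd : Disjoint Q' E' := by
        rw [disjoint_left]
        intro x hx hx'
        have := h3.1 x hx
        have := h1 x hx'
        omega
      have hbb : b 0 ≤ b k := by
        rcases Nat.eq_zero_or_pos k with h0 | h0
        · subst h0; rfl
        · exact (bmono b k hb' 0 k h0 le_rfl).le
      rw [mul_comm]
      symm
      apply mnr_split_level Y β hβ hY _ _ _ _ _ _ (b k)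
      · ext x
        simp only [mem_sdiff, mem_union, hV1, mem_filter, mem_univ, true_and]
        have u1 : x ∈ Sst β b k → ¬ β x = b 0 := by
          intro h; have := mem_Sst.mp h; omega
        have u2 : x ∈ E → ¬ β x = b 0 := by
          intro h; have := hE x h; omega
        clear hc hV1 ih hd hV h3 h1 h2 hE
        tauto
      · rw [union_assoc]
      · intro x hx
        simp only [mem_sdiff, mem_union] at hx
        rcases hx.1 with h | h
        · exact (h3.1 x h).le
        · exact (h1 x h).le
      · intro x hx
        rcases mem_union.mp hx with h | h
        · exact (mem_Sst.mp h).1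
        · rw [hE x h]; exact hbk
      · exact h3.1
      · intro x hx
        rcases mem_union.mp hx with h | h
        · exact (h1 x h).ge
        · exact (mem_Sst.mp h).1.le
      · rw [card_sdiff_of_subset hV, card_union_of_disjoint hd]
        omega
    rw [sum_congr rfl fun E' _ => e1 E', ← Fintype.sum_prod_type', ← sum_filter, ← sum_filter]
    refine sum_bij' (fun p _ => p.2 ∪ p.1 ∪ Sst β b k)
      (fun Q _ => (Q.filter (fun x => β x = b k), Q.filter (fun x => β x < b k))) ?_ ?_ ?_ ?_ ?_
    · rintro ⟨E', Q'⟩ h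
      simp only [mem_filter, mem_univ, true_and] at h ⊢
      obtain ⟨h1, h2, h3, h4⟩ := h
      constructor
      · intro x hx
        simp only [mem_union] at hx
        rcases hx with (h | h) | h
        · have := h3 x h; omega
        · have := h1 x h; omega
        · exact (mem_Sst.mp h).2
      · intro j hj
        rcases Nat.lt_succ_iff_lt_or_eq.mp hj with h | h
        · refine ⟨(h4 j h).1.trans (subset_union_left.trans subset_union_left), ?_⟩
          rw [← (h4 j h).2]
          congr 1
          ext x
          simp only [mem_filter, mem_union]
          have := bmono b k hb' j k h le_rfl
          have : x ∈ E' → ¬ β x = b j := by intro h; have := h1 x h; omega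
          have : x ∈ Sst β b k → ¬ β x = b j := by intro h; have := mem_Sst.mp h; omega
          tauto
        · subst h
          refine ⟨subset_union_right, ?_⟩
          rw [← h2]
          congr 1
          ext x
          simp only [mem_filter, mem_union]
          have : x ∈ Q' → ¬ β x = b j := by intro h; have := h3 x h; omega
          have : x ∈ Sst β b j → ¬ β x = b j := by intro h; have := mem_Sst.mp h; omega
          have := h1 x
          tauto
    · intro Q h
      simp only [mem_filter, mem_univ, true_and] at h ⊢
      obtain ⟨h1, h2⟩ := h
      refine ⟨fun x hx => hx.2, (h2 k (by omega)).2, fun x hx => (mem_filter.mp hx).2, ?_⟩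
      intro j hj
      have hjk := bmono b k hb' j k hj le_rfl
      have hjk' : b (j + 1) ≤ b k := by
        rcases Nat.lt_or_ge (j + 1) k with h | h
        · exact (bmono b k hb' (j + 1) k h le_rfl).le
        · have : j + 1 = k := by omega
          rw [this]
      constructor
      · intro x hx
        have := mem_Sst.mp hx
        exact mem_filter.mpr ⟨(h2 j (by omega)).1 hx, by omega⟩
      · rw [← (h2 j (by omega)).2, filter_filter]
        congr 1
        ext x
        simp only [mem_filter]
        constructor
        · tauto
        · rintro ⟨h, h'⟩; exact ⟨h, by omega, h'⟩
    · rintro ⟨E', Q'⟩ h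
      simp only [mem_filter, mem_univ, true_and] at h
      obtain ⟨h1, h2, h3, h4⟩ := h
      have q1 : ∀ x, x ∈ Q' → β x < b k := h3
      simp only [Prod.mk.injEq]
      constructor <;> ext x <;> simp only [mem_filter, mem_union]
      · have : x ∈ Q' → ¬ β x = b k := by intro h; have := h3 x h; omega
        have : x ∈ Sst β b k → ¬ β x = b k := by intro h; have := mem_Sst.mp h; omega
        have := h1 x
        tauto
      · have : x ∈ E' → ¬ β x < b k := by intro h; have := h1 x h; omega
        have : x ∈ Sst β b k → ¬ β x < b k := by intro h; have := mem_Sst.mp h; omega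
        have := h3 x
        tauto
    · intro Q h
      simp only [mem_filter, mem_univ, true_and] at h
      obtain ⟨h1, h2⟩ := h
      ext x
      simp only [mem_filter, mem_union]
      have s1 := @(h2 k (by omega)).1 x
      have s2 := h1 x
      rw [mem_Sst] at s1 ⊢
      constructor
      · tauto
      · intro hx
        have := s2 hx
        have : β x < b k ∨ β x = b k ∨ b k < β x := by omega
        tauto
    · rintro ⟨E', Q'⟩ h
      rfl

theorem card_layers (β : α → ℕ) (b : ℕ → ℕ) (hb0 : ∀ x, b 0 ≤ β x) (k : ℕ)
    (hb : ∀ j < k, b j < b (j + 1)) (Q : Finset α) :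
    (Q.filter fun x => β x < b k).card =
      ∑ j ∈ range k, ((Q.filter fun x => β x = b j).card + (Q ∩ Sst β b j).card) := by
  induction k with
  | zero =>
    simp only [range_zero, sum_empty, card_eq_zero, filter_eq_empty_iff]
    intro x _
    have := hb0 x
    omega
  | succ k ih =>
    rw [card_lt_split β b k (hb k (by omega)), card_le_split, ih (fun j hj => hb j (by omega)),
      sum_range_succ, add_assoc]

open Classical in
theorem Pvec_formula2 (Y : Matrix α α R) (β : α → ℕ) (hβ : Monotone β)
    (hY : ∀ a b, ¬ β b < β a → Y a b = 0) (b : ℕ → ℕ) (hb0 : ∀ x, b 0 ≤ β x)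
    (c : ℕ) (hc : (univ.filter (fun x : α => β x = b 0)).card = c) (k : ℕ) (hk : 0 < k)
    (hb : ∀ j < k, b j < b (j + 1)) (E : Finset α) (hE : ∀ x ∈ E, β x = b k) (hEc : E.card = c) :
    Pvec Y β b k E = ∑ Q : Finset α, if univ.filter (fun x => β x = b 0) ⊆ Q ∧
        (∀ x ∈ Q, β x < b k) ∧ Q.card = Tn β b k + k * c then
      mnr Y ((Q ∪ E) \ univ.filter (fun x => β x = b 0)) Q else 0 := by
  rw [Pvec_formula Y β hβ hY b hb0 c hc k hb E hE hEc]
  set V1 := univ.filter (fun x => β x = b 0) with hV1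
  apply sum_congr rfl
  intro Q _
  by_cases h : goodQ β b c k Q
  · rw [if_pos h, if_pos]
    refine ⟨?_, h.1, ?_⟩
    · have : Q.filter (fun x => β x = b 0) = V1 := by
        apply Finset.eq_of_subset_of_card_le
        · exact filter_subset_filter _ (subset_univ _)
        · rw [hc, (h.2 0 hk).2]
      rw [← this]
      exact filter_subset _ _
    · have e : (Q.filter fun x => β x < b k) = Q := filter_true_of_mem h.1
      rw [← e, card_layers β b hb0 k hb]
      have : ∀ j ∈ range k, ((Q.filter fun x => β x = b j).card + (Q ∩ Sst β b j).card) =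
          c + (Sst β b j).card := by
        intro j hj
        have := h.2 j (mem_range.mp hj)
        rw [this.2, inter_eq_right.mpr this.1]
      rw [sum_congr rfl this, sum_add_distrib, Tn, sum_const, card_range, smul_eq_mul, add_comm]
  · rw [if_neg h]
    by_cases h' : V1 ⊆ Q ∧ (∀ x ∈ Q, β x < b k) ∧ Q.card = Tn β b k + k * c
    swap
    · rw [if_neg h']
    rw [if_pos h']
    obtain ⟨h1, h2, h3⟩ := h'
    by_contra hne
    apply h
    have hlev : ∀ i, b 0 ≤ i → i < b k → (Q.filter fun x => β x = i).card ≤ c := by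
      intro i hi hik
      have h4 := mnr_level Y β hY _ _ (Ne.symm hne) i
      have h5 := card_le_split β i Q
      have h6 : ((Q ∪ E) \ V1).filter (fun x => β x ≤ i) = (Q.filter fun x => β x ≤ i) \ V1 := by
        ext x
        simp only [mem_filter, mem_sdiff, mem_union]
        have : x ∈ E → ¬ β x ≤ i := by intro h; have := hE x h; omega
        tauto
      have h7 : V1 ⊆ Q.filter fun x => β x ≤ i := by
        intro x hx
        refine mem_filter.mpr ⟨h1 hx, ?_⟩
        have := (mem_filter.mp hx).2
        omega
      rw [h6, card_sdiff_of_subset h7] at h4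
      omega
    have hle : ∀ j ∈ range k, ((Q.filter fun x => β x = b j).card + (Q ∩ Sst β b j).card) ≤
        c + (Sst β b j).card := by
      intro j hj
      have hj := mem_range.mp hj
      have := bmono b k hb j k hj le_rfl
      have := card_le_card (inter_subset_right : Q ∩ Sst β b j ⊆ Sst β b j)
      have h0 : b 0 ≤ b j := by
        rcases Nat.eq_zero_or_pos j with h | h
        · subst h; rfl
        · exact (bmono b k hb 0 j h hj.le).le
      have := hlev (b j) h0 (by omega)
      omega
    have e : (Q.filter fun x => β x < b k) = Q := filter_true_of_mem h2
    have hsum := card_layers β b hb0 k hb Q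
    rw [e, h3] at hsum
    have hall : ∀ j ∈ range k, ((Q.filter fun x => β x = b j).card + (Q ∩ Sst β b j).card) =
        c + (Sst β b j).card := by
      apply (sum_eq_sum_iff_of_le hle).mp
      rw [← hsum, sum_add_distrib, Tn, sum_const, card_range, smul_eq_mul, add_comm]
    refine ⟨h2, fun j hj => ?_⟩
    have h8 := hall j (mem_range.mpr hj)
    have := bmono b k hb j k hj le_rfl
    have h9 := card_le_card (inter_subset_right : Q ∩ Sst β b j ⊆ Sst β b j)
    have h0 : b 0 ≤ b j := by
      rcases Nat.eq_zero_or_pos j with h | h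
      · subst h; rfl
      · exact (bmono b k hb 0 j h hj.le).le
    have h10 := hlev (b j) h0 (by omega)
    constructor
    · rw [← inter_eq_right]
      apply Finset.eq_of_subset_of_card_le inter_subset_right
      omega
    · omega

end
end fident
set_option linter.unusedSectionVars false

section coeffM

def rotP (k c : ℕ) (hc : c ≤ k) : Equiv.Perm (Fin k) where
  toFun t := if h : t.1 + c < k then ⟨t.1 + c, h⟩ else ⟨t.1 + c - k, by have := t.2; omega⟩
  invFun s := if h : s.1 < c then ⟨s.1 + (k - c), by omega⟩ else ⟨s.1 - c, by have := s.2; omega⟩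
  left_inv t := by
    have := t.2
    ext
    by_cases h : t.1 + c < k
    · simp [h]
    · have h2 : t.1 + c - k < c := by omega
      simp only [h, dite_false, h2, dite_true]
      omega
  right_inv s := by
    have := s.2
    ext
    by_cases h : s.1 < c
    · have h2 : ¬ (s.1 + (k - c) + c < k) := by omega
      simp only [h, dite_true, h2, dite_false]
      omega
    · have h2 : s.1 - c + c < k := by omega
      simp only [h, dite_false, h2, dite_true]
      omega

theorem rotP_val (k c : ℕ) (hc : c ≤ k) (t : Fin k) :
    (rotP k c hc t).1 = if t.1 + c < k then t.1 + c else t.1 + c - k := by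
  simp only [rotP, Equiv.coe_fn_mk]
  split_ifs <;> rfl

theorem rotP_symm_val (k c : ℕ) (hc : c ≤ k) (s : Fin k) :
    ((rotP k c hc).symm s).1 = if s.1 < c then s.1 + (k - c) else s.1 - c := by
  simp only [rotP, Equiv.coe_fn_symm_mk]
  split_ifs <;> rfl

theorem strictMono_gap {k m : ℕ} (e : Fin k → Fin m) (he : StrictMono e) (t : ℕ) (j : ℕ)
    (h : t + j < k) : (e ⟨t, by omega⟩).1 + j ≤ (e ⟨t + j, h⟩).1 := by
  induction j with
  | zero => simp
  | succ j ih =>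
    have := ih (by omega)
    have h2 : e ⟨t + j, by omega⟩ < e ⟨t + (j + 1), h⟩ := he (by simp [Fin.lt_def])
    rw [Fin.lt_def] at h2
    omega

variable {R : Type*} [CommRing R]

theorem principal_minor {n m c : ℕ} (hm : m + c = n) (hcm : c ≤ m)
    (Y : Matrix (Fin n) (Fin n) R) (s : Finset (Fin m)) (hs : ∀ i : Fin m, m ≤ i.1 + c → i ∈ s)
    (k : ℕ) (hk : s.card = k) (hck : c ≤ k) (Q : Finset (Fin n))
    (hQ : ∀ x : Fin n, x ∈ Q ↔ ∃ i ∈ s, (rotP m c hcm i).1 = x.1) :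
    (Matrix.of (fun i j : s => Y (Fin.cast hm (i.1.addNat c))
      (Fin.castLE (by omega) (rotP m c hcm j.1)))).det =
    Equiv.Perm.sign (rotP k c hck) •
      mnr Y ((Q ∪ univ.filter fun x : Fin n => m ≤ x.1) \ univ.filter fun x : Fin n => x.1 < c) Q := by
  set e := s.orderEmbOfFin hk with he
  have hes : ∀ t, e t ∈ s := fun t => orderEmbOfFin_mem s hk t
  have hesurj : ∀ i ∈ s, ∃ t, e t = i := by
    intro i hi
    have : i ∈ Set.range e := by rw [he, range_orderEmbOfFin]; exact hi
    exact this
  have hmono : StrictMono e := e.strictMono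
  have e1 : ∀ t : Fin k, t.1 + c < k → (e t).1 + c < m := by
    intro t ht
    have := strictMono_gap e hmono t.1 (k - 1 - t.1) (by omega)
    have h2 := (e ⟨t.1 + (k - 1 - t.1), by omega⟩).2
    simp only [Fin.eta] at this
    omega
  have e2 : ∀ t : Fin k, ¬ t.1 + c < k → m ≤ (e t).1 + c := by
    have hsub : (univ.filter fun t : Fin k => m ≤ (e t).1 + c) ⊆
        univ.filter fun t : Fin k => ¬ t.1 + c < k := by
      intro t ht
      simp only [mem_filter, mem_univ, true_and] at ht ⊢
      intro h
      have := e1 t h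
      omega
    have hcard : (univ.filter fun t : Fin k => ¬ t.1 + c < k).card ≤
        (univ.filter fun t : Fin k => m ≤ (e t).1 + c).card := by
      rw [card_filter_orderEmb s hk (fun i => m ≤ i.1 + c)]
      refine card_le_card_of_injOn (fun t => if h : t.1 + (m - k) < m then ⟨t.1 + (m - k), h⟩ else t.castLE (by
        rw [← hk]; exact (card_le_univ s).trans (by simp))) ?_ ?_
      · intro t ht
        have hkm : k ≤ m := by rw [← hk]; exact (card_le_univ s).trans (by simp)
        have := t.2
        have h0 : t.1 + (m - k) < m := by omega
        simp only [coe_filter, mem_univ, true_and, Set.mem_ofPred_eq] at ht ⊢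
        rw [dif_pos h0]
        refine ⟨hs _ ?_, ?_⟩ <;> simp <;> omega
      · intro t _ t' _ h
        have hkm : k ≤ m := by rw [← hk]; exact (card_le_univ s).trans (by simp)
        have := t.2
        have := t'.2
        have h0 : t.1 + (m - k) < m := by omega
        have h1 : t'.1 + (m - k) < m := by omega
        simp only [h0, h1, dite_true, Fin.mk.injEq] at h
        ext
        omega
    intro t ht
    have : t ∈ univ.filter fun t : Fin k => m ≤ (e t).1 + c := by
      rw [Finset.eq_of_subset_of_card_le hsub hcard]
      simpa using ht
    simpa using this
  have step1 : (Matrix.of (fun i j : s => Y (Fin.cast hm (i.1.addNat c))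
      (Fin.castLE (by omega) (rotP m c hcm j.1)))).det =
      (Y.submatrix (fun t : Fin k => Fin.cast hm ((e t).addNat c))
        (fun t : Fin k => Fin.castLE (by omega) (rotP m c hcm (e t)))).det := by
    rw [← Matrix.det_submatrix_equiv_self (s.orderIsoOfFin hk).toEquiv]
    rfl
  rw [step1]
  set κ : Fin k → Fin n := fun t => Fin.castLE (by omega) (rotP m c hcm (e ((rotP k c hck).symm t)))
    with hκ
  have step2 : Y.submatrix (fun t : Fin k => Fin.cast hm ((e t).addNat c))
        (fun t : Fin k => Fin.castLE (by omega) (rotP m c hcm (e t))) =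
      (Y.submatrix (fun t : Fin k => Fin.cast hm ((e t).addNat c)) κ).submatrix id (rotP k c hck) := by
    ext i j
    simp [hκ]
  have κval : ∀ t : Fin k, (κ t).1 = if t.1 < c then
      (e ((rotP k c hck).symm t)).1 + c - m else (e ((rotP k c hck).symm t)).1 + c := by
    intro t
    have := t.2
    have h1 := rotP_symm_val k c hck t
    simp only [hκ, Fin.val_castLE]
    rw [rotP_val]
    by_cases h : t.1 < c
    · rw [if_pos h] at h1 ⊢
      have := e2 ((rotP k c hck).symm t) (by omega)
      rw [if_neg (by omega)]
    · rw [if_neg h] at h1 ⊢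
      have := e1 ((rotP k c hck).symm t) (by omega)
      rw [if_pos (by omega)]
  have κmono : StrictMono κ := by
    intro t t' htt
    rw [Fin.lt_def] at htt ⊢
    rw [κval, κval]
    have h1 := rotP_symm_val k c hck t
    have h2 := rotP_symm_val k c hck t'
    have := t'.2
    have q := (e ((rotP k c hck).symm t)).2
    by_cases h : t.1 < c
    · rw [if_pos h] at h1 ⊢
      by_cases h' : t'.1 < c
      · rw [if_pos h'] at h2 ⊢
        have a1 := e2 ((rotP k c hck).symm t) (by omega)
        have : (rotP k c hck).symm t < (rotP k c hck).symm t' := by rw [Fin.lt_def]; omega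
        have := hmono this
        rw [Fin.lt_def] at this
        omega
      · rw [if_neg h']
        omega
    · have h' : ¬ t'.1 < c := by omega
      rw [if_neg h] at h1 ⊢
      rw [if_neg h'] at h2 ⊢
      have : (rotP k c hck).symm t < (rotP k c hck).symm t' := by rw [Fin.lt_def]; omega
      have := hmono this
      rw [Fin.lt_def] at this
      omega
  rw [step2, Matrix.det_permute']
  have im1 : (univ.image fun t : Fin k => Fin.cast hm ((e t).addNat c)) =
      (Q ∪ univ.filter fun x : Fin n => m ≤ x.1) \ univ.filter fun x : Fin n => x.1 < c := by
    ext x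
    simp only [mem_image, mem_univ, true_and, mem_sdiff, mem_union, mem_filter, hQ]
    constructor
    · rintro ⟨t, rfl⟩
      simp only [Fin.val_cast, Fin.val_addNat]
      refine ⟨?_, by omega⟩
      by_cases h : (e t).1 + c < m
      · exact Or.inl ⟨e t, hes t, by rw [rotP_val, if_pos h]⟩
      · exact Or.inr (by omega)
    · rintro ⟨h | h, h2⟩
      · obtain ⟨i, hi, hi'⟩ := h
        obtain ⟨t, rfl⟩ := hesurj i hi
        refine ⟨t, ?_⟩
        ext
        simp only [Fin.val_cast, Fin.val_addNat]
        rw [rotP_val] at hi'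
        have := (e t).2
        split_ifs at hi' <;> omega
      · have := x.2
        obtain ⟨t, ht⟩ := hesurj ⟨x.1 - c, by omega⟩ (hs _ (by simp; omega))
        refine ⟨t, ?_⟩
        ext
        simp only [Fin.val_cast, Fin.val_addNat, ht]
        omega
  have im2 : univ.image κ = Q := by
    ext x
    simp only [mem_image, mem_univ, true_and, hQ]
    constructor
    · rintro ⟨t, rfl⟩
      exact ⟨_, hes _, rfl⟩
    · rintro ⟨i, hi, hi'⟩
      obtain ⟨t, rfl⟩ := hesurj i hi
      refine ⟨rotP k c hck t, ?_⟩
      ext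
      rw [← hi']
      simp [hκ]
  rw [← im1]
  have hfin := mnr_image Y (fun t : Fin k => Fin.cast hm ((e t).addNat c)) κ ?_ κmono
  · rw [im2] at hfin
    rw [hfin]
    rw [Units.smul_def, zsmul_eq_mul]
  · intro t t' h
    have := hmono h
    rw [Fin.lt_def] at this ⊢
    simp only [Fin.val_cast, Fin.val_addNat]
    omega

theorem coeff_M {n m c : ℕ} (hm : m + c = n) (hcm : c ≤ m)
    (Y : Matrix (Fin n) (Fin n) R) (d k : ℕ) (hd : d + k = m) (hck : c ≤ k) :
    ∃ ε : ℤˣ, (Matrix.det (Matrix.of fun i j : Fin m =>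
      Polynomial.C (Y (Fin.cast hm (i.addNat c)) (Fin.castLE (by omega) j))
      + if (Fin.cast hm (i.addNat c) : Fin n) = Fin.castLE (by omega) j
        then Polynomial.X else 0)).coeff d = ε • ∑ Q : Finset (Fin n),
        if (univ.filter fun x : Fin n => x.1 < c) ⊆ Q ∧ (∀ x ∈ Q, x.1 < m) ∧ Q.card = k then
        mnr Y ((Q ∪ univ.filter fun x : Fin n => m ≤ x.1) \ univ.filter fun x : Fin n => x.1 < c) Q
        else 0 := by
  classical
  set M : Matrix (Fin m) (Fin m) (Polynomial R) := (Matrix.of fun i j : Fin m =>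
      Polynomial.C (Y (Fin.cast hm (i.addNat c)) (Fin.castLE (by omega) j))
      + if (Fin.cast hm (i.addNat c) : Fin n) = Fin.castLE (by omega) j
        then Polynomial.X else 0) with hM
  set σ := rotP m c hcm with hσ
  set N : Matrix (Fin m) (Fin m) R := Matrix.of fun i j =>
    Y (Fin.cast hm (i.addNat c)) (Fin.castLE (by omega) (σ j)) with hN
  have h1 : M.submatrix id σ = N.map Polynomial.C + Matrix.diagonal (fun i =>
      if i ∈ univ.filter (fun i : Fin m => i.1 + c < m) then (Polynomial.X : Polynomial R) else 0) := by
    ext1 i j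
    simp only [hM, hN, Matrix.submatrix_apply, Matrix.of_apply, id, Matrix.add_apply,
      Matrix.map_apply, Matrix.diagonal_apply, mem_filter, mem_univ, true_and]
    congr 1
    have hv := rotP_val m c hcm j
    rw [← hσ] at hv
    have := i.2
    have := j.2
    have : (Fin.cast hm (i.addNat c) : Fin n) = Fin.castLE (by omega) (σ j) ↔
        (i = j ∧ i.1 + c < m) := by
      rw [Fin.ext_iff, Fin.ext_iff]
      simp only [Fin.val_cast, Fin.val_addNat, Fin.val_castLE, hv]
      split_ifs <;> omega
    simp only [this]
    by_cases hij : i = j <;> simp [hij]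
  refine ⟨Equiv.Perm.sign σ * Equiv.Perm.sign (rotP k c hck), ?_⟩
  have h2 : M.det = Equiv.Perm.sign σ • (M.submatrix id σ).det := by
    rw [Matrix.det_permute', Units.smul_def, zsmul_eq_mul, ← mul_assoc]
    norm_cast
    rw [Int.units_mul_self]
    simp
  rw [h2, Units.smul_def, Polynomial.coeff_smul, h1, coeff_diag, mul_smul, ← Units.smul_def]
  congr 1
  rw [smul_sum]
  rw [← sum_filter]
  simp only [smul_ite, smul_zero]
  rw [← sum_filter]
  have mainprop : ∀ s : Finset (Fin m), sᶜ ⊆ univ.filter (fun i : Fin m => i.1 + c < m) →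
      ∀ i : Fin m, m ≤ i.1 + c → i ∈ s := by
    intro s hs i hi
    by_contra hcon
    have := hs (mem_compl.mpr hcon)
    simp only [mem_filter, mem_univ, true_and] at this
    omega
  have hinj : Function.Injective (fun i : Fin m => (Fin.castLE (by omega) (σ i) : Fin n)) := by
    intro i j h
    exact σ.injective (Fin.castLE_injective _ h)
  refine sum_bij' (fun s _ => s.image (fun i : Fin m => (Fin.castLE (by omega) (σ i) : Fin n)))
    (fun Q _ => univ.filter fun i : Fin m => (Fin.castLE (by omega) (σ i) : Fin n) ∈ Q) ?_ ?_ ?_ ?_ ?_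
  · intro s hs
    simp only [mem_filter, mem_univ, true_and] at hs ⊢
    refine ⟨?_, ?_, ?_⟩
    · intro x hx
      simp only [mem_filter, mem_univ, true_and] at hx
      refine mem_image.mpr ⟨σ.symm ⟨x.1, by omega⟩, mainprop s hs.1 _ ?_, by simp⟩
      rw [hσ, rotP_symm_val, if_pos hx]
      omega
    · intro x hx
      obtain ⟨i, _, rfl⟩ := mem_image.mp hx
      exact (σ i).2
    · rw [card_image_of_injective _ hinj]
      have := card_compl_add_card s
      rw [Fintype.card_fin] at this
      omega
  · intro Q hQ
    simp only [mem_filter, mem_univ, true_and] at hQ ⊢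
    obtain ⟨q1, q2, q3⟩ := hQ
    have himg : (univ.filter fun i : Fin m => (Fin.castLE (by omega) (σ i) : Fin n) ∈ Q).card = k := by
      refine Eq.trans ?_ q3
      rw [← card_image_of_injective _ hinj]
      congr 1
      ext x
      simp only [mem_image, mem_filter, mem_univ, true_and]
      constructor
      · rintro ⟨i, hi, rfl⟩; exact hi
      · intro hx
        refine ⟨σ.symm ⟨x.1, q2 x hx⟩, ?_, ?_⟩ <;> simp [hx]
    constructor
    · intro i hi
      simp only [mem_compl, mem_filter, mem_univ, true_and] at hi ⊢
      by_contra hcon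
      apply hi
      apply q1
      have := i.2
      simp only [mem_filter, mem_univ, true_and, Fin.val_castLE, hσ, rotP_val]
      rw [if_neg hcon]
      omega
    · have := card_compl_add_card (univ.filter fun i : Fin m => (Fin.castLE (by omega) (σ i) : Fin n) ∈ Q)
      rw [Fintype.card_fin] at this
      omega
  · intro s hs
    ext i
    simp only [mem_filter, mem_univ, true_and, mem_image]
    constructor
    · rintro ⟨j, hj, hij⟩
      rwa [← hinj hij]
    · intro hi; exact ⟨i, hi, rfl⟩
  · intro Q hQ
    simp only [mem_filter, mem_univ, true_and] at hQ
    obtain ⟨q1, q2, q3⟩ := hQ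
    ext x
    simp only [mem_image, mem_filter, mem_univ, true_and]
    constructor
    · rintro ⟨i, hi, rfl⟩; exact hi
    · intro hx
      refine ⟨σ.symm ⟨x.1, q2 x hx⟩, ?_, ?_⟩ <;> simp [hx]
  · intro s hs
    simp only [mem_filter, mem_univ, true_and] at hs
    have hk : s.card = k := by
      have := card_compl_add_card s
      rw [Fintype.card_fin] at this
      omega
    rw [← principal_minor hm hcm Y s (mainprop s hs.1) k hk hck]
    · rfl
    · intro x
      simp only [mem_image, Fin.ext_iff, Fin.val_castLE]
      rfl

end coeffM
set_option linter.unusedSectionVars false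

section homog
variable {α : Type*} [LinearOrder α] [Fintype α]

theorem Uvec_map {R S : Type*} [CommRing R] [CommRing S] (φ : R →+* S) (Y : Matrix α α R)
    (β : α → ℕ) (b : ℕ → ℕ) (k : ℕ) (A : Finset α) :
    φ (Uvec Y β b k A) = Uvec (Y.map φ) β b k A := by
  induction k generalizing A with
  | zero => simp only [Uvec]; split_ifs <;> simp
  | succ k ih =>
    simp only [Uvec]
    split_ifs
    · rw [map_sum]
      apply sum_congr rfl
      intro B _
      rw [map_mul, mnr_map, ih]
    · simp

theorem prod_orderEmb {S : Type*} [CommRing S] (t : α → S) (A : Finset α) (k : ℕ)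
    (h : A.card = k) : ∏ i, t (A.orderEmbOfFin h i) = ∏ x ∈ A, t x := by
  have : A = univ.map (A.orderEmbOfFin h).toEmbedding := by simp
  conv_rhs => rw [this, prod_map]
  rfl

theorem mnr_scale {S : Type*} [CommRing S] (Y Z : Matrix α α S) (t : α → S)
    (h : ∀ a b, Y a b * t b = Z a b * t a) (A B : Finset α) :
    mnr Y A B * ∏ x ∈ B, t x = mnr Z A B * ∏ x ∈ A, t x := by
  by_cases hc : B.card = A.card
  swap
  · rw [mnr_card_ne _ hc, mnr_card_ne _ hc, zero_mul, zero_mul]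
  rw [mnr_eq_det Y A B rfl hc, mnr_eq_det Z A B rfl hc, ← prod_orderEmb t B _ hc,
    ← prod_orderEmb t A _ rfl, mul_comm, mul_comm (Matrix.det _), ← Matrix.det_mul_row,
    ← Matrix.det_mul_column]
  congr 1
  ext i j
  simp only [Matrix.of_apply, Matrix.submatrix_apply]
  rw [mul_comm, h, mul_comm]

theorem Uvec_scale {S : Type*} [CommRing S] (Y Z : Matrix α α S) (t : α → S)
    (h : ∀ a b, Y a b * t b = Z a b * t a) (β : α → ℕ) (b : ℕ → ℕ) (k : ℕ) (A : Finset α) :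
    Uvec Y β b k A * ∏ j ∈ range k, ∏ x ∈ Sst β b j, t x = Uvec Z β b k A * ∏ x ∈ A, t x := by
  induction k generalizing A with
  | zero =>
    simp only [Uvec]
    split_ifs with hA
    · simp [hA]
    · simp
  | succ k ih =>
    simp only [Uvec]
    split_ifs with hA
    · rw [sum_mul, sum_mul, prod_range_succ, ← prod_sdiff hA.1]
      apply sum_congr rfl
      intro B _
      have h1 := ih B
      have h2 := mnr_scale Y Z t h (A \ Sst β b k) B
      calc _ = mnr Y (A \ Sst β b k) B * (Uvec Y β b k B * ∏ j ∈ range k, ∏ x ∈ Sst β b j, t x) *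
            ∏ x ∈ Sst β b k, t x := by ring
        _ = (mnr Y (A \ Sst β b k) B * ∏ x ∈ B, t x) * Uvec Z β b k B *
            ∏ x ∈ Sst β b k, t x := by rw [h1]; ring
        _ = _ := by rw [h2]; ring
    · simp

variable {σ : Type*}

def wHom (w : σ → ℕ) : MvPolynomial σ ℂ →+* Polynomial (MvPolynomial σ ℂ) :=
  MvPolynomial.eval₂Hom (Polynomial.C.comp MvPolynomial.C)
    (fun v => Polynomial.C (X v) * Polynomial.X ^ w v)

def wt (w : σ → ℕ) (m : σ →₀ ℕ) : ℕ := m.sum fun v k => k * w v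

theorem wHom_monomial (w : σ → ℕ) (m : σ →₀ ℕ) (r : ℂ) :
    wHom w (monomial m r) = Polynomial.C (monomial m r) * Polynomial.X ^ wt w m := by
  rw [wHom, coe_eval₂Hom, eval₂_monomial, monomial_eq, map_mul, mul_assoc]
  congr 1
  simp only [mul_pow, Finsupp.prod, wt, Finsupp.sum, prod_mul_distrib, map_prod, map_pow]
  congr 1
  rw [← prod_pow_eq_pow_sum]
  apply prod_congr rfl
  intro v _
  rw [← pow_mul, mul_comm]

theorem wHom_coeff (w : σ → ℕ) (g : MvPolynomial σ ℂ) (m : σ →₀ ℕ) (i : ℕ) :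
    coeff m ((wHom w g).coeff i) = if i = wt w m then coeff m g else 0 := by
  classical
  induction g using MvPolynomial.induction_on' with
  | monomial m' r =>
    rw [wHom_monomial, Polynomial.coeff_C_mul_X_pow, coeff_monomial]
    by_cases h : m' = m
    · subst h
      by_cases h2 : i = wt w m' <;> simp [h2]
    · by_cases h2 : i = wt w m' <;> simp [h2, h]
  | add p q hp hq =>
    rw [map_add, Polynomial.coeff_add, coeff_add, hp, hq, coeff_add]
    split_ifs <;> simp

theorem wt_const_of_dvd (w : σ → ℕ) (g u : MvPolynomial σ ℂ) (hu : u ≠ 0) (hg : g ∣ u) (p q : ℕ)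
    (h : wHom w u * Polynomial.X ^ p = Polynomial.C u * Polynomial.X ^ q) :
    ∃ e, ∀ m ∈ g.support, wt w m = e := by
  obtain ⟨k, rfl⟩ := hg
  set G := wHom w g with hG
  set K := wHom w k with hK
  rw [map_mul, ← hG, ← hK] at h
  have hne : Polynomial.C (g * k) * Polynomial.X ^ q ≠ (0 : Polynomial (MvPolynomial σ ℂ)) :=
    mul_ne_zero (by simpa using hu) (pow_ne_zero _ Polynomial.X_ne_zero)
  have hGK : G * K * Polynomial.X ^ p ≠ 0 := by rw [h]; exact hne
  have hGK2 : G * K ≠ 0 := left_ne_zero_of_mul hGK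
  have hG0 : G ≠ 0 := left_ne_zero_of_mul hGK2
  have hK0 : K ≠ 0 := right_ne_zero_of_mul hGK2
  have hX0 : (Polynomial.X ^ p : Polynomial (MvPolynomial σ ℂ)) ≠ 0 := right_ne_zero_of_mul hGK
  have d1 : G.natDegree + K.natDegree + p = q := by
    have := congrArg Polynomial.natDegree h
    rw [Polynomial.natDegree_mul hGK2 hX0, Polynomial.natDegree_mul hG0 hK0,
      Polynomial.natDegree_X_pow, Polynomial.natDegree_C_mul_X_pow _ _ hu] at this
    exact this
  have d2 : G.natTrailingDegree + K.natTrailingDegree + p = q := by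
    have := congrArg Polynomial.natTrailingDegree h
    rw [Polynomial.natTrailingDegree_mul hGK2 hX0, Polynomial.natTrailingDegree_mul hG0 hK0,
      Polynomial.natTrailingDegree_X_pow, Polynomial.natTrailingDegree_mul (by simpa using hu)
        (pow_ne_zero _ Polynomial.X_ne_zero), Polynomial.natTrailingDegree_X_pow,
      Polynomial.natTrailingDegree_C] at this
    omega
  have t1 := Polynomial.natTrailingDegree_le_natDegree G
  have t2 := Polynomial.natTrailingDegree_le_natDegree K
  refine ⟨G.natDegree, fun m hm => ?_⟩
  have hc : G.coeff (wt w m) ≠ 0 := by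
    intro h0
    have := wHom_coeff w g m (wt w m)
    rw [← hG, h0, if_pos rfl, coeff_zero] at this
    exact (mem_support_iff.mp hm) this.symm
  have := Polynomial.le_natDegree_of_ne_zero hc
  have := Polynomial.natTrailingDegree_le_of_ne_zero hc
  omega

theorem gcd_unit_of_wt [DecidableEq α] (tgt src : σ → α) (β : α → ℕ)
    (hβ : ∀ v, β (src v) < β (tgt v)) (g : MvPolynomial σ ℂ) (hg : g ≠ 0)
    (h1 : ∃ e, ∀ m ∈ g.support, wt (fun v => β (tgt v) - β (src v)) m = e)
    (h2 : ∀ a, ∃ e, ∀ m ∈ g.support, wt (fun v => (β (tgt v) + if tgt v = a then 1 else 0) -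
      (β (src v) + if src v = a then 1 else 0)) m = e)
    (h3 : ∀ a, ∃ m ∈ g.support, ∀ v ∈ m.support, tgt v ≠ a) : IsUnit g := by
  classical
  obtain ⟨e, he⟩ := h1
  have key : ∀ a (m : σ →₀ ℕ), wt (fun v => (β (tgt v) + if tgt v = a then 1 else 0) -
      (β (src v) + if src v = a then 1 else 0)) m + wt (fun v => if src v = a then 1 else 0) m =
      wt (fun v => β (tgt v) - β (src v)) m + wt (fun v => if tgt v = a then 1 else 0) m := by
    intro a m
    simp only [wt, Finsupp.sum, ← sum_add_distrib]
    apply sum_congr rfl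
    intro v _
    rw [← mul_add, ← mul_add]
    congr 1
    have := hβ v
    split_ifs <;> omega
  have hzero : ∀ m ∈ g.support, m = 0 := by
    intro m hm
    by_contra hne
    have hsne : m.support.Nonempty := by
      rwa [Finsupp.support_nonempty_iff]
    obtain ⟨v, hv, hmax⟩ := exists_max_image m.support (fun v => β (tgt v)) hsne
    obtain ⟨ea, hea⟩ := h2 (tgt v)
    obtain ⟨m', hm', hm'2⟩ := h3 (tgt v)
    have k1 := key (tgt v) m
    have k2 := key (tgt v) m'
    rw [hea m hm, he m hm] at k1
    rw [hea m' hm', he m' hm'] at k2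
    have z1 : wt (fun v' => if tgt v' = tgt v then 1 else 0) m' = 0 := by
      simp only [wt, Finsupp.sum]
      apply sum_eq_zero
      intro v' hv'
      rw [if_neg (hm'2 v' hv'), mul_zero]
    have z2 : wt (fun v' => if src v' = tgt v then 1 else 0) m = 0 := by
      simp only [wt, Finsupp.sum]
      apply sum_eq_zero
      intro v' hv'
      rw [if_neg, mul_zero]
      intro h
      have := hmax v' hv'
      have := hβ v'
      rw [h] at this
      omega
    have z3 : 0 < wt (fun v' => if tgt v' = tgt v then 1 else 0) m := by
      simp only [wt, Finsupp.sum]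
      apply sum_pos' (fun _ _ => Nat.zero_le _)
      refine ⟨v, hv, ?_⟩
      simpa using Nat.pos_of_ne_zero (Finsupp.mem_support_iff.mp hv)
    omega
  have hC : g = C (coeff 0 g) := by
    ext m
    rw [coeff_C]
    by_cases h : 0 = m
    · subst h; simp
    · rw [if_neg h]
      by_contra hcon
      exact h (hzero m (mem_support_iff.mpr hcon)).symm
  rw [hC]
  apply IsUnit.map
  rw [isUnit_iff_ne_zero]
  intro h0
  rw [h0, C_0] at hC
  exact hg hC

/-- common divisors of the U-vector are units, given good specializations -/
theorem Uvec_gcd_unit [Nonempty α] (tgt src : σ → α) (β : α → ℕ) (b : ℕ → ℕ) (k : ℕ)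
    (hβ : ∀ v, β (src v) < β (tgt v)) (Y : Matrix α α (MvPolynomial σ ℂ))
    (hY : ∀ x y, Y x y = 0 ∨ ∃ v, tgt v = x ∧ src v = y ∧ Y x y = X v)
    (hsp : ∀ a, ∃ ψ : σ → ℂ, (∀ v, tgt v = a → ψ v = 0) ∧
      ∃ A, Uvec (Y.map (eval ψ)) β b k A ≠ 0)
    (g : MvPolynomial σ ℂ) (hg : ∀ A, g ∣ Uvec Y β b k A) : IsUnit g := by
  have hex : ∃ A, Uvec Y β b k A ≠ 0 := by
    obtain ⟨ψ, _, A, hA⟩ := hsp (Classical.arbitrary α)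
    refine ⟨A, fun h => hA ?_⟩
    rw [← Uvec_map, h, map_zero]
  obtain ⟨A₀, hA₀⟩ := hex
  have hw : ∀ χ : α → ℕ, (∀ v, χ (src v) ≤ χ (tgt v)) →
      ∃ e, ∀ m ∈ g.support, wt (fun v => χ (tgt v) - χ (src v)) m = e := by
    intro χ hχ
    have := Uvec_scale (Y.map (wHom (fun v => χ (tgt v) - χ (src v)))) (Y.map Polynomial.C)
      (fun x => Polynomial.X ^ χ x) ?_ β b k A₀
    · rw [← Uvec_map, ← Uvec_map] at this
      simp only [prod_pow_eq_pow_sum] at this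
      exact wt_const_of_dvd _ g _ hA₀ (hg A₀) _ _ this
    · intro x y
      simp only [Matrix.map_apply]
      rcases hY x y with h | ⟨v, rfl, rfl, h⟩
      · rw [h]; simp
      · rw [h]
        have h4 : wHom (fun v => χ (tgt v) - χ (src v)) (X v) =
            Polynomial.C (X v) * Polynomial.X ^ (χ (tgt v) - χ (src v)) := by
          simp [wHom]
        rw [h4, mul_assoc, ← pow_add, Nat.sub_add_cancel (hχ v)]
  have hg0 : g ≠ 0 := by
    intro h
    exact hA₀ (zero_dvd_iff.mp (h ▸ hg A₀))
  refine gcd_unit_of_wt tgt src β hβ g hg0 (hw β fun v => (hβ v).le) (fun a => ?_) (fun a => ?_)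
  · apply hw (fun x => β x + if x = a then 1 else 0)
    intro v
    have := hβ v
    split_ifs <;> omega
  · obtain ⟨ψ, hψ, A, hA⟩ := hsp a
    rw [← Uvec_map] at hA
    have hge : eval ψ g ≠ 0 := by
      intro h
      obtain ⟨q, hq⟩ := hg A
      rw [hq, map_mul, h, zero_mul] at hA
      exact hA rfl
    rw [eval_eq] at hge
    obtain ⟨m, hm, hm2⟩ := exists_ne_zero_of_sum_ne_zero hge
    refine ⟨m, hm, fun v hv hva => ?_⟩
    have := right_ne_zero_of_mul hm2
    rw [prod_ne_zero_iff] at this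
    apply this v hv
    rw [hψ v hva, zero_pow (Finsupp.mem_support_iff.mp hv)]

end homog
set_option linter.unusedSectionVars false

section comb
variable {α : Type*} [LinearOrder α] [Fintype α]

theorem mnr_perm_ne (E : α → α → Prop) (Y : Matrix α α ℂ)
    (hY1 : ∀ x y, E x y → Y y x = 1) (hY0 : ∀ x y, ¬ E x y → Y y x = 0)
    (u1 : ∀ x x' y, E x y → E x' y → x = x') (u2 : ∀ x y y', E x y → E x y' → y = y')
    (A A' : Finset α) (hA' : ∀ y ∈ A', ∃ x ∈ A, E x y) (hc : A.card = A'.card) :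
    mnr Y A' A ≠ 0 := by
  rw [mnr_eq_det Y A' A rfl hc]
  set e := A'.orderEmbOfFin rfl with he
  set f := A.orderEmbOfFin hc with hf
  set M := Y.submatrix e f with hM
  have hMM : M * M.transpose = 1 := by
    ext i j
    rw [Matrix.mul_apply, Matrix.one_apply]
    obtain ⟨x, hx, hxe⟩ := hA' (e i) (orderEmbOfFin_mem A' rfl i)
    have : x ∈ Set.range f := by rw [hf, range_orderEmbOfFin]; exact hx
    obtain ⟨t, rfl⟩ := this
    rw [sum_eq_single t]
    · simp only [hM, Matrix.transpose_apply, Matrix.submatrix_apply]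
      rw [hY1 _ _ hxe, one_mul]
      split_ifs with h
      · subst h; exact hY1 _ _ hxe
      · apply hY0
        intro h'
        exact h (e.injective (u2 _ _ _ hxe h'))
    · intro t' _ ht'
      simp only [hM, Matrix.transpose_apply, Matrix.submatrix_apply]
      rw [hY0 (f t') (e i), zero_mul]
      intro h
      exact ht' (f.injective (u1 _ _ _ h hxe))
    · simp
  intro h0
  have := congrArg Matrix.det hMM
  rw [Matrix.det_mul, h0, zero_mul, Matrix.det_one] at this
  exact zero_ne_one this

theorem Uvec_chain (E : α → α → Prop) (Y : Matrix α α ℂ)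
    (hY1 : ∀ x y, E x y → Y y x = 1) (hY0 : ∀ x y, ¬ E x y → Y y x = 0)
    (u1 : ∀ x x' y, E x y → E x' y → x = x') (u2 : ∀ x y y', E x y → E x y' → y = y')
    (β : α → ℕ) (b : ℕ → ℕ) (r : ℕ) (hb : ∀ j < r + 1, b j < b (j + 1))
    (D : Finset α) (hD : ∀ k ≤ r, Sst β b k ⊆ D)
    (hn : ∀ x ∈ D, ∀ k, 1 ≤ k → k ≤ r → β x < b k → ∃ y ∈ D, E x y ∧ β y ≤ b k)
    (k : ℕ) (hk : k ≤ r + 1) : ∃ A ⊆ D, Uvec Y β b k A ≠ 0 := by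
  classical
  induction k with
  | zero => exact ⟨∅, by simp, by simp [Uvec]⟩
  | succ k ih =>
    obtain ⟨A, hAD, hA⟩ := ih (by omega)
    obtain ⟨s1, s2⟩ := Uvec_supp Y β b k (fun j hj => hb j (by omega)) A hA
    have hex : ∀ x ∈ A, ∃ y, y ∈ D ∧ E x y ∧ β y ≤ b k := by
      intro x hx
      rcases Nat.eq_zero_or_pos k with h0 | h0
      · subst h0
        have : A = ∅ := by rw [← card_eq_zero, s2]; simp [Tn]
        rw [this] at hx; simp at hx
      · exact hn x (hAD hx) k h0 (by omega) (s1 x hx)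
    choose! τ hτ using hex
    have hinj : Set.InjOn τ A := by
      intro x hx x' hx' h
      have h1 := (hτ x hx).2.1
      have h2 := (hτ x' hx').2.1
      rw [← h] at h2
      exact u1 _ _ _ h1 h2
    have hcard : A.card = (A.image τ).card := (card_image_of_injOn hinj).symm
    have hdis : ∀ y ∈ A.image τ, y ∉ Sst β b k := by
      intro y hy hS
      obtain ⟨x, hx, rfl⟩ := mem_image.mp hy
      have := (hτ x hx).2.2
      have := (mem_Sst.mp hS).1
      omega
    have hsd : (A.image τ ∪ Sst β b k) \ Sst β b k = A.image τ := by
      rw [union_sdiff_right, Finset.sdiff_eq_self_iff_disjoint, disjoint_left]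
      exact hdis
    refine ⟨A.image τ ∪ Sst β b k, union_subset ?_ (hD k (by omega)), ?_⟩
    · intro y hy
      obtain ⟨x, hx, rfl⟩ := mem_image.mp hy
      exact (hτ x hx).1
    · simp only [Uvec]
      rw [if_pos, hsd, sum_eq_single A]
      · apply mul_ne_zero _ hA
        apply mnr_perm_ne E Y hY1 hY0 u1 u2 A _ _ hcard
        intro y hy
        obtain ⟨x, hx, rfl⟩ := mem_image.mp hy
        exact ⟨x, hx, (hτ x hx).2.1⟩
      · intro B _ hBA
        by_cases hBc : B.card = (A.image τ).card
        swap
        · rw [mnr_card_ne _ hBc, zero_mul]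
        rw [mnr_eq_zero Y _ B (fun _ => True) (fun x => x ∈ A), zero_mul]
        · intro y hy x _ _ hx
          obtain ⟨x', hx', rfl⟩ := mem_image.mp hy
          apply hY0
          intro h
          rw [u1 _ _ _ h (hτ x' hx').2.1] at hx
          exact hx hx'
        · rw [filter_true, ← hcard]
          apply card_lt_card
          rw [Finset.ssubset_iff_subset_ne]
          refine ⟨fun x hx => (mem_filter.mp hx).2, fun h => hBA ?_⟩
          symm
          apply Finset.eq_of_subset_of_card_le
          · rw [← h]; exact filter_subset _ _
          · omega
      · simp
      · refine ⟨subset_union_right, fun x hx hx' => ?_⟩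
        rcases mem_union.mp hx with h | h
        · obtain ⟨z, hz, rfl⟩ := mem_image.mp h
          exact (hτ z hz).2.2
        · exact absurd h hx'

theorem exists_edges (β p : α → ℕ) (b : ℕ → ℕ) (r c : ℕ) (hb : ∀ j < r + 1, b j < b (j + 1))
    (hinj : ∀ x y, β x = β y → p x = p y → x = y)
    (hbig : ∀ k, 1 ≤ k → k ≤ r → ∀ q ≤ c, ∃ x, β x = b k ∧ p x = q)
    (hsmall : ∀ k ≤ r, ∀ x ∈ Sst β b k, p x < c) (a : α) :
    ∃ (E : α → α → Prop) (D : Finset α), (∀ x y, E x y → β x < β y) ∧ (∀ x, ¬ E x a) ∧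
      (∀ x x' y, E x y → E x' y → x = x') ∧ (∀ x y y', E x y → E x y' → y = y') ∧
      (∀ k ≤ r, Sst β b k ⊆ D) ∧
      (∀ x ∈ D, ∀ k, 1 ≤ k → k ≤ r → β x < b k → ∃ y ∈ D, E x y ∧ β y ≤ b k) := by
  classical
  set lab : α → ℕ := fun x => if β x < β a ∧ p x = p a then c else p x with hlab
  set D : Finset α := univ.filter fun x => (β x < β a → p x < c) ∧ lab x ≤ c with hDdef
  have hD : ∀ x, x ∈ D ↔ (β x < β a → p x < c) ∧ lab x ≤ c := by
    intro x; simp [hDdef]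
  have labinj : ∀ x ∈ D, ∀ y ∈ D, β x = β y → lab x = lab y → x = y := by
    intro x hx y hy h1 h2
    apply hinj x y h1
    rw [hD] at hx hy
    simp only [hlab] at h2
    have := hx.1
    have := hy.1
    split_ifs at h2 <;> omega
  set E : α → α → Prop := fun x y => x ∈ D ∧ y ∈ D ∧ lab x = lab y ∧ β x < β y ∧
    ∀ z ∈ D, lab z = lab x → ¬ (β x < β z ∧ β z < β y) with hE
  refine ⟨E, D, ?_, ?_, ?_, ?_, ?_, ?_⟩
  · intro x y h; exact h.2.2.2.1
  · rintro x ⟨hx, hy, h1, h2, _⟩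
    have := ((hD x).mp hx).1 h2
    simp only [hlab] at h1
    split_ifs at h1 <;> omega
  · rintro x x' y ⟨hx, hy, h1, h2, h3⟩ ⟨hx', _, h1', h2', h3'⟩
    rcases lt_trichotomy (β x) (β x') with h | h | h
    · exact absurd ⟨h, h2'⟩ (h3 x' hx' (by omega))
    · exact labinj x hx x' hx' h (by omega)
    · exact absurd ⟨h, h2⟩ (h3' x hx (by omega))
  · rintro x y y' ⟨hx, hy, h1, h2, h3⟩ ⟨_, hy', h1', h2', h3'⟩
    rcases lt_trichotomy (β y) (β y') with h | h | h
    · exact absurd ⟨h2, h⟩ (h3' y hy (by omega))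
    · exact labinj y hy y' hy' h (by omega)
    · exact absurd ⟨h2', h⟩ (h3 y' hy' (by omega))
  · intro k hk x hx
    have := hsmall k hk x hx
    rw [hD]
    refine ⟨fun _ => this, ?_⟩
    simp only [hlab]
    split_ifs <;> omega
  · intro x hx k h1 hk hxk
    have hx2 := (hD x).mp hx
    have hy : ∃ y ∈ D, lab y = lab x ∧ β y = b k := by
      by_cases hak : b k < β a
      · by_cases hpa : p x = p a
        · obtain ⟨y, y1, y2⟩ := hbig k h1 hk (p a) (by have := hx2.1 (by omega); omega)
          refine ⟨y, ?_, ?_, y1⟩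
          · rw [hD]
            have := hx2.1 (by omega)
            refine ⟨fun _ => by omega, ?_⟩
            simp only [hlab]
            split_ifs <;> omega
          · simp only [hlab]
            rw [if_pos, if_pos] <;> constructor <;> omega
        · have hpc := hx2.1 (by omega)
          obtain ⟨y, y1, y2⟩ := hbig k h1 hk (p x) (by omega)
          refine ⟨y, ?_, ?_, y1⟩
          · rw [hD]
            refine ⟨fun _ => by omega, ?_⟩
            simp only [hlab]
            split_ifs <;> omega
          · simp only [hlab]
            rw [if_neg, if_neg] <;> omega
      · obtain ⟨y, y1, y2⟩ := hbig k h1 hk (lab x) hx2.2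
        have hl : lab y = lab x := by
          have : lab y = p y := by
            simp only [hlab]
            rw [if_neg]; omega
          omega
        refine ⟨y, ?_, hl, y1⟩
        rw [hD]
        exact ⟨fun _ => by omega, by have := hx2.2; omega⟩
    obtain ⟨y, yD, yl, yb⟩ := hy
    obtain ⟨z, hz, hmin⟩ := exists_min_image
      (D.filter fun z => lab z = lab x ∧ β x < β z) β ⟨y, by
        rw [mem_filter]; exact ⟨yD, yl, by omega⟩⟩
    rw [mem_filter] at hz
    refine ⟨z, hz.1, ⟨hx, hz.1, hz.2.1.symm, hz.2.2, ?_⟩, ?_⟩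
    · rintro w hw hwl ⟨hw1, hw2⟩
      have := hmin w (by rw [mem_filter]; exact ⟨hw, hwl, hw1⟩)
      omega
    · have := hmin y (by rw [mem_filter]; exact ⟨yD, yl, by omega⟩)
      omega

/-- Part D in full. -/
theorem Uvec_gcd_main {σ : Type*} [Nonempty α] (tgt src : σ → α) (β p : α → ℕ) (b : ℕ → ℕ)
    (r c : ℕ) (hb : ∀ j < r + 1, b j < b (j + 1))
    (hinj : ∀ x y, β x = β y → p x = p y → x = y)
    (hbig : ∀ k, 1 ≤ k → k ≤ r → ∀ q ≤ c, ∃ x, β x = b k ∧ p x = q)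
    (hsmall : ∀ k ≤ r, ∀ x ∈ Sst β b k, p x < c)
    (hβ : ∀ v, β (src v) < β (tgt v)) (Y : Matrix α α (MvPolynomial σ ℂ))
    (hY0 : ∀ x y, ¬ β y < β x → Y x y = 0)
    (hY : ∀ x y, β y < β x → ∃ v, tgt v = x ∧ src v = y ∧ Y x y = X v)
    (g : MvPolynomial σ ℂ) (hg : ∀ A, g ∣ Uvec Y β b (r + 1) A) : IsUnit g := by
  classical
  refine Uvec_gcd_unit tgt src β b (r + 1) hβ Y ?_ ?_ g hg
  · intro x y
    by_cases h : β y < β x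
    · exact Or.inr (hY x y h)
    · exact Or.inl (hY0 x y h)
  · intro a
    obtain ⟨E, D, e1, e2, e3, e4, e5, e6⟩ := exists_edges β p b r c hb hinj hbig hsmall a
    have hY1 : ∀ x y, E x y →
        (Y.map (eval fun v => if E (src v) (tgt v) then (1 : ℂ) else 0)) y x = 1 := by
      intro x y hxy
      obtain ⟨v, h1, h2, h3⟩ := hY y x (e1 x y hxy)
      rw [Matrix.map_apply, h3, eval_X, h1, h2, if_pos hxy]
    have hY2 : ∀ x y, ¬ E x y →
        (Y.map (eval fun v => if E (src v) (tgt v) then (1 : ℂ) else 0)) y x = 0 := by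
      intro x y hxy
      rw [Matrix.map_apply]
      by_cases h : β x < β y
      · obtain ⟨v, h1, h2, h3⟩ := hY y x h
        rw [h3, eval_X, h1, h2, if_neg hxy]
      · rw [hY0 _ _ h, map_zero]
    refine ⟨fun v => if E (src v) (tgt v) then 1 else 0, ?_, ?_⟩
    · intro v hv
      show (if E (src v) (tgt v) then (1 : ℂ) else 0) = 0
      rw [if_neg]
      rw [hv]
      exact e2 _
    · obtain ⟨A, _, hA⟩ := Uvec_chain E _ hY1 hY2 e3 e4 β b r hb D e5 e6 (r + 1) le_rfl
      exact ⟨A, hA⟩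

end comb
set_option linter.unusedSectionVars false

section assemble
variable {α : Type*} [LinearOrder α] [Fintype α]

theorem dvd_of_family {S ι : Type*} [CommRing S] [IsDomain S] [UniqueFactorizationMonoid S]
    [Fintype ι] (u : ι → S) (hu : ∀ g, (∀ i, g ∣ u i) → IsUnit g) (g h : S)
    (H : ∀ i, g ∣ h * u i) : g ∣ h := by
  classical
  obtain ⟨N⟩ : Nonempty (NormalizedGCDMonoid S) := inferInstance
  have h1 : g ∣ (univ : Finset ι).gcd (fun i => h * u i) := Finset.dvd_gcd fun i _ => H i
  have h1 := h1.trans (Finset.gcd_mul_left' univ u h).dvd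
  have h2 : IsUnit ((univ : Finset ι).gcd u) :=
    hu _ fun i => Finset.gcd_dvd (mem_univ i)
  exact (h2.dvd_mul_right).mp h1

theorem abstract_gcd {σ : Type*} [Nonempty α] (tgt src : σ → α) (β p : α → ℕ) (b : ℕ → ℕ)
    (r c s : ℕ) (hb : ∀ j < r + 1, b j < b (j + 1)) (hmono : Monotone β)
    (hb0 : ∀ x, b 0 ≤ β x) (hbl : ∀ x, β x ≤ b (r + 1))
    (hc0 : (univ.filter fun x => β x = b 0).card = c)
    (hcl : (univ.filter fun x => β x = b (r + 1)).card = c)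
    (hs : Tn β b (r + 1) = s)
    (hinj : ∀ x y, β x = β y → p x = p y → x = y)
    (hbig : ∀ k, 1 ≤ k → k ≤ r → ∀ q ≤ c, ∃ x, β x = b k ∧ p x = q)
    (hsmall : ∀ k ≤ r, ∀ x ∈ Sst β b k, p x < c)
    (hβ : ∀ v, β (src v) < β (tgt v)) (Y : Matrix α α (MvPolynomial σ ℂ))
    (hY0 : ∀ x y, ¬ β y < β x → Y x y = 0)
    (hY : ∀ x y, β y < β x → ∃ v, tgt v = x ∧ src v = y ∧ Y x y = X v) :
    (∀ I J : Finset α, I.card = s + c → J.card = s + c →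
      Pvec Y β b (r + 1) (univ.filter fun x => β x = b (r + 1)) ∣ mnr (Y ^ (r + 1)) I J) ∧
    (∀ g, (∀ I J : Finset α, I.card = s + c → J.card = s + c → g ∣ mnr (Y ^ (r + 1)) I J) →
      g ∣ Pvec Y β b (r + 1) (univ.filter fun x => β x = b (r + 1))) := by
  classical
  have mf := fun J => main_factor Y β hmono hY0 b hb0 c hc0 J (r + 1) hb
  have hfil : ∀ I : Finset α, I.filter (fun x => β x < b (r + 1)) =
      I.filter (fun x => ¬ β x = b (r + 1)) := by
    intro I
    apply filter_congr
    intro x _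
    have := hbl x
    omega
  have hgt : ∀ I : Finset α, I.filter (fun x => b (r + 1) < β x) = ∅ := by
    intro I
    rw [filter_eq_empty_iff]
    intro x _
    have := hbl x
    omega
  constructor
  · intro I J hI _
    obtain ⟨Z1, -, Eq⟩ := mf J
    by_cases h1 : Tn β b (r + 1) < (I.filter fun x => β x < b (r + 1)).card
    · rw [Z1 I h1]; exact dvd_zero _
    · have hsub : I.filter (fun x => β x = b (r + 1)) ⊆ univ.filter fun x => β x = b (r + 1) :=
        filter_subset_filter _ (subset_univ _)
      have hle := card_le_card hsub
      have hsum := card_filter_add_card_filter_not (s := I) (fun x => β x = b (r + 1))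
      rw [← hfil] at hsum
      rw [Eq I (by omega) (by omega), eq_of_subset_of_card_le hsub (by omega)]
      exact (dvd_mul_left _ _).trans (dvd_mul_right _ _)
  · intro g hg
    have hbm := bmono b (r + 1) hb
    have hbm' : ∀ i j, i ≤ j → j ≤ r + 1 → b i ≤ b j := by
      intro i j h1 h2
      rcases Nat.eq_or_lt_of_le h1 with h | h
      · rw [h]
      · exact (hbm i j h h2).le
    set β' : α → ℕ := fun x => b (r + 1) + b 0 - β x with hβ'
    set b' : ℕ → ℕ := fun k => b (r + 1) + b 0 - b (r + 1 - k) with hb'd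
    have hb' : ∀ j < r + 1, b' j < b' (j + 1) := by
      intro j hj
      have h1 := hbm (r + 1 - (j + 1)) (r + 1 - j) (by omega) (by omega)
      have h2 := hbm' (r + 1 - j) (r + 1) (by omega) le_rfl
      simp only [hb'd]; omega
    have hSst : ∀ j < r + 1, Sst β' b' j = Sst β b (r + 1 - 1 - j) := by
      intro j hj
      ext x
      rw [mem_Sst, mem_Sst]
      have e1 : r + 1 - 1 - j = r + 1 - (j + 1) := by omega
      have e2 : r + 1 - (j + 1) + 1 = r + 1 - j := by omega
      rw [e1, e2]
      have h2 := hbm' (r + 1 - j) (r + 1) (by omega) le_rfl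
      have h3 := hbm' (r + 1 - (j + 1)) (r + 1) (by omega) le_rfl
      have h4 := hbl x
      simp only [hb'd, hβ']
      omega
    have hle : ∀ j < r + 1, ∀ x, β' x ≤ b' j ↔ b (r + 1 - j) ≤ β x := by
      intro j hj x
      have h2 := hbm' (r + 1 - j) (r + 1) (by omega) le_rfl
      have h4 := hbl x
      simp only [hb'd, hβ']
      omega
    have hlt : ∀ x, β' x < b' (r + 1) → b 0 < β x := by
      intro x
      have h4 := hbl x
      simp only [hb'd, hβ', Nat.sub_self]
      omega
    have hs' : Tn β' b' (r + 1) = s := by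
      rw [← hs, Tn, Tn, ← sum_range_reflect]
      apply sum_congr rfl
      intro j hj
      rw [mem_range] at hj
      rw [hSst _ (by omega)]
      congr 2; omega
    have hUW : ∀ A B, g ∣ Pvec Y β b (r + 1) (univ.filter fun x => β x = b (r + 1)) *
        Uvec Y β b (r + 1) A * Uvec Y.transpose β' b' (r + 1) B := by
      intro A B
      by_cases hA : Uvec Y β b (r + 1) A = 0
      · rw [hA]; simp
      by_cases hB : Uvec Y.transpose β' b' (r + 1) B = 0
      · rw [hB]; simp
      obtain ⟨a1, a2⟩ := Uvec_supp Y β b (r + 1) hb A hA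
      obtain ⟨b1, b2⟩ := Uvec_supp _ β' b' (r + 1) hb' B hB
      have f1 : (A ∪ univ.filter fun x => β x = b (r + 1)).filter (fun x => β x < b (r + 1)) = A := by
        ext x
        simp only [mem_filter, mem_union, mem_univ, true_and]
        have := a1 x
        constructor
        · rintro ⟨h | h, h'⟩
          · exact h
          · omega
        · intro h; exact ⟨Or.inl h, this h⟩
      have f2 : (A ∪ univ.filter fun x => β x = b (r + 1)).filter (fun x => β x = b (r + 1)) =
          univ.filter fun x => β x = b (r + 1) := by
        ext x
        simp only [mem_filter, mem_union, mem_univ, true_and]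
        tauto
      have cI : (A ∪ univ.filter fun x => β x = b (r + 1)).card = s + c := by
        rw [card_union_of_disjoint, a2, hcl, hs]
        rw [disjoint_left]
        intro x hx
        have := a1 x hx
        simp only [mem_filter, mem_univ, true_and]
        omega
      have cJ : ((univ.filter fun x => β x = b 0) ∪ B).card = s + c := by
        rw [card_union_of_disjoint, b2, hc0, hs', add_comm]
        rw [disjoint_right]
        intro x hx
        have := hlt x (b1 x hx)
        simp only [mem_filter, mem_univ, true_and]
        omega
      have h := hg _ _ cI cJ
      rw [(mf _).2.2 _ (by rw [f1, a2]) (by rw [f2, hcl]), f1, f2, hgt,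
        V_dual Y β β' b b' (r + 1) B hSst hle hb' hlt hB] at h
      rwa [mul_comm (Pvec _ _ _ _ _)]
    refine dvd_of_family (Uvec Y β b (r + 1))
      (fun g hg => Uvec_gcd_main tgt src β p b r c hb hinj hbig hsmall hβ Y hY0 hY g hg) g _ ?_
    intro A
    refine dvd_of_family (Uvec Y.transpose β' b' (r + 1)) ?_ g _ (hUW A)
    intro g' hg'
    have hb'l : ∀ x, β' x + β x = b (r + 1) + b 0 := by
      intro x; have := hbl x; simp only [hβ']; omega
    refine Uvec_gcd_main src tgt β' p b' r c hb' ?_ ?_ ?_ ?_ Y.transpose ?_ ?_ g' hg'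
    · intro x y h1 h2
      refine hinj x y ?_ h2
      have := hb'l x
      have := hb'l y
      omega
    · intro k h1 h2 q hq
      obtain ⟨x, x1, x2⟩ := hbig (r + 1 - k) (by omega) (by omega) q hq
      refine ⟨x, ?_, x2⟩
      simp only [hβ', hb'd, x1]
    · intro k hk x hx
      rw [hSst k (by omega)] at hx
      exact hsmall _ (by omega) x hx
    · intro v
      have := hb'l (src v)
      have := hb'l (tgt v)
      have := hβ v
      omega
    · intro x y h
      rw [Matrix.transpose_apply]
      apply hY0
      have := hb'l x
      have := hb'l y
      omega
    · intro x y h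
      have := hb'l x
      have := hb'l y
      obtain ⟨v, v1, v2, v3⟩ := hY y x (by omega)
      exact ⟨v, v2, v1, v3⟩

end assemble
section concrete

theorem blkSum_zero (c : ℕ → ℕ) : blkSum c 0 = 0 := by simp [blkSum]

theorem blkSum_succ (c : ℕ → ℕ) (j : ℕ) : blkSum c (j + 1) = blkSum c j + c (j + 1) := by
  rw [blkSum, sum_Icc_succ_top (by omega), blkSum]

theorem blkSum_mono (c : ℕ → ℕ) : Monotone (blkSum c) :=
  monotone_nat_of_le_succ fun j => by rw [blkSum_succ]; omega

theorem blk_le_iff (c : ℕ → ℕ) (l a j : ℕ) (ha : a ≤ blkSum c l) :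
    blk c a ≤ j ↔ a ≤ blkSum c j := by
  constructor
  · intro h
    have : blk c a ∈ {j | a ≤ blkSum c j} := Nat.sInf_mem ⟨l, ha⟩
    exact le_trans this (blkSum_mono c h)
  · intro h
    exact Nat.sInf_le h

theorem exists_enum (B : Finset ℕ) (r l : ℕ) (hl : 2 ≤ l) (hB : B.card = r + 2)
    (h1 : 1 ∈ B) (h2 : l ∈ B) (h3 : ∀ i ∈ B, 1 ≤ i ∧ i ≤ l) :
    ∃ b : ℕ → ℕ, (∀ j < r + 1, b j < b (j + 1)) ∧ b 0 = 1 ∧ b (r + 1) = l ∧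
      (∀ k ≤ r + 1, b k ∈ B) ∧ (∀ k ≤ r, ∀ i ∈ B, b k < i → b (k + 1) ≤ i) := by
  set e := B.orderEmbOfFin hB with he
  set b : ℕ → ℕ := fun k => if h : k < r + 2 then e ⟨k, h⟩ else 0 with hb
  have hbe : ∀ k (h : k < r + 2), b k = e ⟨k, h⟩ := fun k h => by simp only [hb]; rw [dif_pos h]
  have hsurj : ∀ i ∈ B, ∃ k, k < r + 2 ∧ b k = i := by
    intro i hi
    have : i ∈ Set.range e := by rw [he, range_orderEmbOfFin]; exact hi
    obtain ⟨k, hk⟩ := this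
    exact ⟨k.1, k.2, by rw [hbe _ k.2, ← hk]⟩
  have hlt : ∀ i j, i < j → j < r + 2 → b i < b j := by
    intro i j h h'
    rw [hbe i (by omega), hbe j h']
    exact e.strictMono (by simpa using h)
  have hmem : ∀ k ≤ r + 1, b k ∈ B := by
    intro k hk
    rw [hbe k (by omega)]
    exact orderEmbOfFin_mem _ _ _
  refine ⟨b, fun j hj => hlt _ _ (by omega) (by omega), ?_, ?_, hmem, ?_⟩
  · obtain ⟨k, hk, hk1⟩ := hsurj 1 h1
    rcases Nat.eq_zero_or_pos k with h | h
    · rw [← h]; exact hk1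
    · have := hlt 0 k h hk
      have := (h3 _ (hmem 0 (by omega))).1
      omega
  · obtain ⟨k, hk, hk1⟩ := hsurj l h2
    rcases Nat.eq_or_lt_of_le (show k ≤ r + 1 by omega) with h | h
    · rw [← h]; exact hk1
    · have := hlt k (r + 1) h (by omega)
      have := (h3 _ (hmem (r + 1) (by omega))).2
      omega
  · intro k hk i hi hki
    obtain ⟨k', hk', rfl⟩ := hsurj i hi
    by_contra hcon
    push Not at hcon
    have a1 : ¬ k' ≤ k := by
      intro h
      rcases Nat.eq_or_lt_of_le h with h | h
      · subst h; omega
      · have := hlt k' k h (by omega); omega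
    rcases Nat.eq_or_lt_of_le (show k + 1 ≤ k' by omega) with h | h
    · subst h; omega
    · have := hlt (k + 1) k' h hk'; omega

/-- The numerical facts. -/
theorem numerics (l : ℕ) (hl : 2 ≤ l) (c : ℕ → ℕ) (hcl : c l = c 1)
    (hcne : ∀ j, 1 < j → j < l → c j ≠ c 1) :
    ((Icc 1 l).filter fun i => c 1 ≤ c i).card =
        ((Icc 1 l).filter fun i => c 1 < c i).card + 2 ∧
    (∑ i ∈ (Icc 1 l).filter (fun i => c i ≤ c 1), c i) - 2 * c 1 =
      ∑ i ∈ (Icc 1 l).filter (fun i => c i < c 1), c i ∧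
    blkSum c l = dBS c l + (∑ i ∈ (Icc 1 l).filter (fun i => c i < c 1), c i) +
      (((Icc 1 l).filter fun i => c 1 < c i).card + 2) * c 1 := by
  have hd : ∀ i ∈ Icc 1 l, c i = c 1 ↔ i ∈ ({1, l} : Finset ℕ) := by
    intro i hi
    rw [mem_Icc] at hi
    simp only [mem_insert, mem_singleton]
    constructor
    · intro h
      by_contra hcon
      push Not at hcon
      exact hcne i (by omega) (by omega) h
    · rintro (rfl | rfl)
      · rfl
      · exact hcl
  have e1 : (Icc 1 l).filter (fun i => c 1 ≤ c i) =
      (Icc 1 l).filter (fun i => c 1 < c i) ∪ {1, l} := by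
    ext i
    simp only [mem_filter, mem_union]
    constructor
    · rintro ⟨h1, h2⟩
      rw [← hd i h1]
      rcases Nat.eq_or_lt_of_le h2 with h | h
      · exact Or.inr h.symm
      · exact Or.inl ⟨h1, h⟩
    · rintro (⟨h1, h2⟩ | h)
      · exact ⟨h1, h2.le⟩
      · have hi : i ∈ Icc 1 l := by
          simp only [mem_insert, mem_singleton] at h
          rw [mem_Icc]; omega
        exact ⟨hi, ((hd i hi).mpr h).ge⟩
  have e2 : (Icc 1 l).filter (fun i => c i ≤ c 1) =
      (Icc 1 l).filter (fun i => c i < c 1) ∪ {1, l} := by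
    ext i
    simp only [mem_filter, mem_union]
    constructor
    · rintro ⟨h1, h2⟩
      rw [← hd i h1]
      rcases Nat.eq_or_lt_of_le h2 with h | h
      · exact Or.inr h
      · exact Or.inl ⟨h1, h⟩
    · rintro (⟨h1, h2⟩ | h)
      · exact ⟨h1, h2.le⟩
      · have hi : i ∈ Icc 1 l := by
          simp only [mem_insert, mem_singleton] at h
          rw [mem_Icc]; omega
        exact ⟨hi, ((hd i hi).mpr h).le⟩
  have hne : (1 : ℕ) ≠ l := by omega
  have c1 : ((Icc 1 l).filter fun i => c 1 ≤ c i).card =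
        ((Icc 1 l).filter fun i => c 1 < c i).card + 2 := by
    rw [e1, card_union_of_disjoint, card_pair hne]
    rw [disjoint_left]
    intro i hi h
    rw [mem_filter] at hi
    have := (hd i hi.1).mpr h
    omega
  refine ⟨c1, ?_, ?_⟩
  · rw [e2, sum_union, sum_pair hne, hcl]
    · omega
    · rw [disjoint_left]
      intro i hi h
      rw [mem_filter] at hi
      have := (hd i hi.1).mpr h
      omega
  · have h1 : blkSum c l = dBS c l + ∑ i ∈ Icc 1 l, min (c i) (c 1) := by
      rw [blkSum, dBS, ← sum_add_distrib]
      apply sum_congr rfl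
      intro i _
      omega
    rw [h1, add_assoc, ← c1, ← smul_eq_mul, ← sum_const]
    congr 1
    rw [← sum_filter_add_sum_filter_not (Icc 1 l) (fun i => c i < c 1)]
    congr 1
    · apply sum_congr rfl
      intro i hi
      rw [mem_filter] at hi
      omega
    · apply sum_congr
      · apply filter_congr
        intro i _
        omega
      · intro i hi
        rw [mem_filter] at hi
        omega

/-- Fibres of the block map. -/
theorem card_fib (c : ℕ → ℕ) (l n : ℕ) (hn : n = blkSum c l) (β : Fin n → ℕ)
    (hβ : ∀ x j, β x ≤ j ↔ x.1 < blkSum c j) (i : ℕ) (hi : i ∈ Icc 1 l) :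
    (univ.filter fun x => β x = i).card = c i := by
  rw [mem_Icc] at hi
  obtain ⟨j, rfl⟩ : ∃ j, i = j + 1 := ⟨i - 1, by omega⟩
  have hs := blkSum_succ c j
  have hm : blkSum c (j + 1) ≤ n := by rw [hn]; exact blkSum_mono c hi.2
  have h1 : (univ.filter fun x => β x = j + 1).map Fin.valEmbedding =
      Ico (blkSum c j) (blkSum c (j + 1)) := by
    ext a
    simp only [mem_map, mem_filter, mem_univ, true_and, Fin.valEmbedding_apply, mem_Ico]
    constructor
    · rintro ⟨x, hx, rfl⟩
      have h1 := hβ x j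
      have h2 := hβ x (j + 1)
      omega
    · rintro ⟨h3, h4⟩
      refine ⟨⟨a, by omega⟩, ?_, rfl⟩
      have h1 := hβ ⟨a, by omega⟩ j
      have h2 := hβ ⟨a, by omega⟩ (j + 1)
      simp only at h1 h2
      omega
  rw [← card_map Fin.valEmbedding, h1, Nat.card_Ico, hs]
  omega

end concrete

/-- Proposition 3.16 / 3.17: the Benlolo–Sanderson element `f` is a greatest common divisor
of the `(s+c) × (s+c)` minors of the matrix power `𝒳^(r+1)`. -/
theorem BS_element_is_gcd_of_minors
    (l : ℕ) (hl : 2 ≤ l) (c : ℕ → ℕ) (hc : ∀ i ∈ Finset.Icc 1 l, 0 < c i)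
    (hcl : c l = c 1) (n : ℕ) (hn : n = blkSum c l) (m : ℕ) (hm : m + c 1 = n)
    (hcne : ∀ j, 1 < j → j < l → c j ≠ c 1)
    (r s : ℕ) (hr : r = ((Finset.Icc 1 l).filter fun i => c 1 < c i).card)
    (hs : s = (∑ i ∈ (Finset.Icc 1 l).filter (fun i => c i ≤ c 1), c i) - 2 * c 1) :
    (∀ ρ κ : Fin (s + c 1) → Fin n, StrictMono ρ → StrictMono κ →
        BSf c l n m hm ∣ ((genX c n ^ (r + 1)).submatrix ρ κ).det) ∧
    (∀ g : MvPolynomial (Pos c n) ℂ,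
        (∀ ρ κ : Fin (s + c 1) → Fin n, StrictMono ρ → StrictMono κ →
          g ∣ ((genX c n ^ (r + 1)).submatrix ρ κ).det) →
        g ∣ BSf c l n m hm) := by
  classical
  obtain ⟨n1, n2, n3⟩ := numerics l hl c hcl hcne
  rw [← hr] at n1 n3
  rw [← hs] at n2
  rw [← n2, ← hn] at n3
  have hc1 : 0 < c 1 := hc 1 (by rw [mem_Icc]; omega)
  have hd : dBS c l + (s + (r + 1) * c 1) = m := by
    have : (r + 2) * c 1 = (r + 1) * c 1 + c 1 := by ring
    omega
  have hck : c 1 ≤ s + (r + 1) * c 1 := by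
    have : (r + 1) * c 1 = r * c 1 + c 1 := by ring
    omega
  obtain ⟨b, hb, hbz, hbl, hbB, hbn⟩ := exists_enum ((Icc 1 l).filter fun i => c 1 ≤ c i) r l hl n1
    (by rw [mem_filter, mem_Icc]; omega) (by rw [mem_filter, mem_Icc]; omega)
    (by intro i hi; rw [mem_filter, mem_Icc] at hi; omega)
  set β : Fin n → ℕ := fun x => blk c (x.1 + 1) with hβd
  have hβ : ∀ x j, β x ≤ j ↔ x.1 < blkSum c j := by
    intro x j
    rw [← Nat.succ_le_iff]
    apply blk_le_iff c l
    rw [← hn]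
    exact x.2
  have hβ1 : ∀ x, 1 ≤ β x := by
    intro x
    have := hβ x 0
    rw [blkSum_zero] at this
    omega
  have hβl : ∀ x, β x ≤ l := by
    intro x
    rw [hβ, ← hn]
    exact x.2
  have hmono : Monotone β := by
    intro x y hxy
    rw [hβ]
    have h := (hβ y (β y)).mp le_rfl
    have : x.1 ≤ y.1 := hxy
    omega
  have hfib := card_fib c l n hn β hβ
  have : Nonempty (Fin n) := ⟨⟨0, by omega⟩⟩
  have hc0 : (univ.filter fun x => β x = b 0).card = c 1 := by
    rw [hbz]; exact hfib 1 (by rw [mem_Icc]; omega)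
  have hcl' : (univ.filter fun x => β x = b (r + 1)).card = c 1 := by
    rw [hbl, hfib l (by rw [mem_Icc]; omega), hcl]
  have hb0 : ∀ x, b 0 ≤ β x := by rw [hbz]; exact hβ1
  have hbL : ∀ x, β x ≤ b (r + 1) := by rw [hbl]; exact hβl
  have hbk : ∀ k ≤ r + 1, (1 ≤ b k ∧ b k ≤ l) ∧ c 1 ≤ c (b k) := by
    intro k hk
    have := hbB k hk
    rw [mem_filter, mem_Icc] at this
    exact this
  have hSsm : ∀ k ≤ r, ∀ x ∈ Sst β b k, c (β x) < c 1 := by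
    intro k hk x hx
    rw [mem_Sst] at hx
    by_contra hcon
    have h1 := hβ1 x
    have h2 := hβl x
    have := hbn k hk (β x) (by rw [mem_filter, mem_Icc]; omega) hx.1
    omega
  have hT : Tn β b (r + 1) = s := by
    have h := card_layers β b hb0 (r + 1) hb (univ.filter fun x => c (β x) < c 1)
    have h1 : ∀ j ∈ range (r + 1), (((univ.filter fun x => c (β x) < c 1).filter
        fun x => β x = b j).card + ((univ.filter fun x => c (β x) < c 1) ∩ Sst β b j).card) =
        (Sst β b j).card := by
      intro j hj
      rw [mem_range] at hj
      have e1 : (univ.filter fun x => c (β x) < c 1).filter (fun x => β x = b j) = ∅ := by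
        rw [filter_eq_empty_iff]
        intro x hx hx2
        rw [mem_filter, hx2] at hx
        have := (hbk j (by omega)).2
        omega
      have e2 : (univ.filter fun x => c (β x) < c 1) ∩ Sst β b j = Sst β b j := by
        rw [inter_eq_right]
        intro x hx
        rw [mem_filter]
        exact ⟨mem_univ _, hSsm j (by omega) x hx⟩
      rw [e1, e2, card_empty, zero_add]
    rw [sum_congr rfl h1] at h
    rw [Tn, ← h, n2]
    rw [card_eq_sum_card_fiberwise (f := β) (t := (Icc 1 l).filter fun i => c i < c 1)]
    · apply sum_congr rfl
      intro i hi
      rw [mem_filter] at hi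
      rw [← hfib i hi.1]
      congr 1
      ext x
      simp only [mem_filter, mem_univ, true_and]
      constructor
      · rintro ⟨_, h⟩; exact h
      · intro h
        refine ⟨⟨by rw [h]; exact hi.2, ?_⟩, h⟩
        have h2 := hβl x
        rcases Nat.eq_or_lt_of_le h2 with h3 | h3
        · have := hi.2
          rw [← h, h3, hcl] at this
          omega
        · rw [hbl]; exact h3
    · intro x hx
      simp only [coe_filter, mem_filter, mem_univ, true_and, Set.mem_ofPred_eq] at hx ⊢
      exact ⟨by rw [mem_Icc]; exact ⟨hβ1 x, hβl x⟩, hx.1⟩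
  have hY0 : ∀ x y : Fin n, ¬ β y < β x → genX c n x y = 0 := by
    intro x y h
    simp only [genX, Matrix.of_apply]
    rw [dif_neg]
    exact fun h' => h h'.2
  have hY : ∀ x y : Fin n, β y < β x → ∃ v : Pos c n, v.1.1 = x ∧ v.1.2 = y ∧
      genX c n x y = X v := by
    intro x y h
    have hlt : y < x := by
      by_contra hcon
      have := hmono (not_lt.mp hcon)
      omega
    refine ⟨⟨(x, y), hlt, h⟩, rfl, rfl, ?_⟩
    simp only [genX, Matrix.of_apply]
    rw [dif_pos ⟨hlt, h⟩]
  have hlow : ∀ x : Fin n, blkSum c (β x - 1) ≤ x.1 := by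
    intro x
    have h1 := hβ x (β x - 1)
    have h2 := hβ1 x
    omega
  have hbs : ∀ i, 1 ≤ i → blkSum c i = blkSum c (i - 1) + c i := by
    intro i hi
    have := blkSum_succ c (i - 1)
    rwa [Nat.sub_add_cancel hi] at this
  obtain ⟨G1, G2⟩ := abstract_gcd (fun v : Pos c n => v.1.1) (fun v => v.1.2) β
    (fun x => x.1 - blkSum c (β x - 1)) b r (c 1) s hb hmono hb0 hbL hc0 hcl' hT
    (by
      intro x y h1 h2
      have a1 := hlow x
      have a2 := hlow y
      simp only [h1] at h2 a1
      ext
      omega)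
    (by
      intro k h1 h2 q hq
      have hk := hbk k (by omega)
      have hlt1 := bmono b (r + 1) hb 0 k (by omega) (by omega)
      have hlt2 := bmono b (r + 1) hb k (r + 1) (by omega) le_rfl
      have hne := hcne (b k) (by omega) (by omega)
      have hS := hbs (b k) hk.1.1
      have hle : blkSum c (b k) ≤ n := by rw [hn]; exact blkSum_mono c hk.1.2
      have hx : β ⟨blkSum c (b k - 1) + q, by omega⟩ = b k := by
        have e1 := hβ ⟨blkSum c (b k - 1) + q, by omega⟩ (b k)
        have e2 := hβ ⟨blkSum c (b k - 1) + q, by omega⟩ (b k - 1)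
        simp only at e1 e2
        omega
      refine ⟨⟨blkSum c (b k - 1) + q, by omega⟩, hx, ?_⟩
      simp only [hx]
      omega)
    (by
      intro k hk x hx
      have h1 := hSsm k hk x hx
      have h2 := (hβ x (β x)).mp le_rfl
      have h3 := hbs (β x) (hβ1 x)
      have h4 := hlow x
      show x.1 - blkSum c (β x - 1) < c 1
      omega)
    (fun v => v.2.2) (genX c n) hY0 hY
  have hbs1 : blkSum c 1 = c 1 := by rw [hbs 1 le_rfl, blkSum_zero]; omega
  have hV1 : (univ.filter fun x : Fin n => x.1 < c 1) = univ.filter fun x => β x = b 0 := by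
    apply filter_congr
    intro x _
    have h1 := hβ x 1
    have h2 := hβ1 x
    rw [hbs1] at h1
    rw [hbz]
    omega
  have hbsl : blkSum c (l - 1) = m := by
    have := hbs l (by omega)
    omega
  have hVlt : ∀ x : Fin n, x.1 < m ↔ β x < b (r + 1) := by
    intro x
    have h1 := hβ x (l - 1)
    rw [hbsl] at h1
    rw [hbl]
    omega
  have hVl : (univ.filter fun x : Fin n => m ≤ x.1) = univ.filter fun x => β x = b (r + 1) := by
    apply filter_congr
    intro x _
    have h1 := hVlt x
    have h2 := hbL x
    omega
  obtain ⟨ε, hε⟩ := coeff_M hm (by omega) (genX c n) (dBS c l) (s + (r + 1) * c 1) hd hck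
  have hP := Pvec_formula2 (genX c n) β hmono hY0 b hb0 (c 1) hc0 (r + 1) (by omega) hb
    (univ.filter fun x => β x = b (r + 1)) (by intro x hx; rw [mem_filter] at hx; exact hx.2) hcl'
  have hBS : BSf c l n m hm = ε • Pvec (genX c n) β b (r + 1)
      (univ.filter fun x => β x = b (r + 1)) := by
    rw [hP]
    refine hε.trans ?_
    congr 1
    apply sum_congr rfl
    intro Q _
    rw [hV1, hVl, hT]
    simp only [hVlt]
    congr!
  have hass : Associated (BSf c l n m hm) (Pvec (genX c n) β b (r + 1)
      (univ.filter fun x => β x = b (r + 1))) := by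
    rw [hBS]
    rcases Int.units_eq_one_or ε with h | h
    · rw [h, one_smul]
    · rw [h, Units.neg_smul, one_smul]
      exact (Associated.refl _).neg_left
  constructor
  · intro ρ κ hρ hκ
    rw [hass.dvd_iff_dvd_left, ← mnr_image _ ρ κ hρ hκ]
    apply G1
    · rw [card_image_of_injective _ hρ.injective, card_univ, Fintype.card_fin]
    · rw [card_image_of_injective _ hκ.injective, card_univ, Fintype.card_fin]
  · intro g hg
    rw [hass.dvd_iff_dvd_right]
    apply G2
    intro I J hI hJ
    rw [mnr_eq_det _ I J hI hJ]
    exact hg _ _ (OrderEmbedding.strictMono _) (OrderEmbedding.strictMono _)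

end
end

section
/- Let K be a field, σ a type, and f ∈ K[x_i : i ∈ σ] a multilinear polynomial, i.e., the degree of f in each single variable x_i is at most 1. Then the principal ideal generated by f is a radical ideal of the polynomial ring K[x_i : i ∈ σ]. -/
/-- Proposition 3.3 (i): a multilinear polynomial (degree at most 1 in each variable)
over a field generates a radical (i.e. semiprime) principal ideal. -/
theorem span_singleton_multilinear_isRadical
    {K : Type*} [Field K] {σ : Type*} (f : MvPolynomial σ K)
    (hf : ∀ i : σ, MvPolynomial.degreeOf i f ≤ 1) :
    (Ideal.span ({f} : Set (MvPolynomial σ K))).IsRadical := by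
  classical
  rw [← isRadical_iff_span_singleton, isRadical_iff_squarefree_or_zero]
  by_cases h0 : f = 0
  · exact Or.inr h0
  left
  rintro x ⟨y, rfl⟩
  have hxx : x * x ≠ 0 := left_ne_zero_of_mul h0
  have hy : y ≠ 0 := right_ne_zero_of_mul h0
  have hx : x ≠ 0 := left_ne_zero_of_mul hxx
  have hd : ∀ i, MvPolynomial.degreeOf i x = 0 := by
    intro i
    have := hf i
    rw [MvPolynomial.degreeOf_mul_eq hxx hy, MvPolynomial.degreeOf_mul_eq hx hx] at this
    omega
  have ht : x.totalDegree = 0 := by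
    rw [MvPolynomial.totalDegree_eq_zero_iff]
    intro m hm i
    have := MvPolynomial.monomial_le_degreeOf i hm
    have := hd i
    omega
  rw [MvPolynomial.totalDegree_eq_zero_iff_eq_C] at ht
  rw [ht] at hx ⊢
  refine (IsUnit.mk0 _ ?_).map MvPolynomial.C
  rintro h
  exact hx (by rw [h, map_zero])
end

section
/- Let K be a field, σ and τ types, and f ∈ K[x_i : i ∈ σ] a multilinear polynomial, i.e., of degree at most 1 in each single variable. Let f̃ ∈ K[x_i, y_j : i ∈ σ, j ∈ τ] be the image of f under the inclusion of polynomial rings (renaming along σ ↪ σ ⊕ τ). Then the ideal of K[x_i, y_j : i ∈ σ, j ∈ τ] generated by f̃ together with all the variables y_j (j ∈ τ) is a radical ideal. -/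
theorem aux_multilinear_isRadical {K : Type*} [Field K] {σ : Type*} (f : MvPolynomial σ K)
    (hf : ∀ i : σ, MvPolynomial.degreeOf i f ≤ 1) : IsRadical f := by
  rw [isRadical_iff_squarefree_or_zero]
  by_cases h0 : f = 0
  · exact Or.inr h0
  left
  rintro g ⟨h, rfl⟩
  have hh : h ≠ 0 := right_ne_zero_of_mul h0
  have hgg : g * g ≠ 0 := left_ne_zero_of_mul h0
  have hg : g ≠ 0 := left_ne_zero_of_mul hgg
  have hd : ∀ i, MvPolynomial.degreeOf i g = 0 := by
    intro i
    have := hf i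
    rw [MvPolynomial.degreeOf_mul_eq hgg hh, MvPolynomial.degreeOf_mul_eq hg hg] at this
    omega
  have hC : g = MvPolynomial.C (MvPolynomial.coeff 0 g) := by
    rw [← MvPolynomial.totalDegree_eq_zero_iff_eq_C, MvPolynomial.totalDegree_eq_zero_iff]
    intro m hm i
    have := MvPolynomial.monomial_le_degreeOf i hm
    rw [hd i] at this
    exact Nat.le_zero.1 this
  rw [hC]
  apply IsUnit.map
  rw [isUnit_iff_ne_zero]
  intro hc
  rw [hc, MvPolynomial.C_0] at hC
  exact hg hC

/-- Proposition 3.3 (ii): if `f` is a multilinear polynomial in the variables `x_i (i ∈ σ)`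
over a field, then the ideal of `K[x_i, y_j : i ∈ σ, j ∈ τ]` generated by (the image of) `f`
together with all the variables `y_j (j ∈ τ)` is radical. -/
theorem span_multilinear_union_vars_isRadical
    {K : Type*} [Field K] {σ τ : Type*} (f : MvPolynomial σ K)
    (hf : ∀ i : σ, MvPolynomial.degreeOf i f ≤ 1) :
    (Ideal.span
        (insert (MvPolynomial.rename (Sum.inl : σ → σ ⊕ τ) f)
          (Set.range fun j : τ => (MvPolynomial.X (Sum.inr j) : MvPolynomial (σ ⊕ τ) K)))).IsRadical := by
  set I := Ideal.span
        (insert (MvPolynomial.rename (Sum.inl : σ → σ ⊕ τ) f)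
          (Set.range fun j : τ => (MvPolynomial.X (Sum.inr j) : MvPolynomial (σ ⊕ τ) K))) with hI
  let φ : MvPolynomial (σ ⊕ τ) K →ₐ[K] MvPolynomial σ K :=
    MvPolynomial.aeval (Sum.elim MvPolynomial.X (fun _ => 0))
  let ψ : MvPolynomial σ K →ₐ[K] MvPolynomial (σ ⊕ τ) K := MvPolynomial.rename Sum.inl
  have hφψ : ∀ p, φ (ψ p) = p := by
    intro p
    simp only [φ, ψ, MvPolynomial.aeval_rename, Sum.elim_comp_inl, MvPolynomial.aeval_X_left_apply]
  have hfI : ψ f ∈ I := Ideal.subset_span (Set.mem_insert _ _)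
  have hq : (Ideal.Quotient.mkₐ K I).comp (ψ.comp φ) = Ideal.Quotient.mkₐ K I := by
    apply MvPolynomial.algHom_ext
    rintro (i | j)
    · simp [φ, ψ]
    · have : (MvPolynomial.X (Sum.inr j) : MvPolynomial (σ ⊕ τ) K) ∈ I :=
        Ideal.subset_span (Set.mem_insert_of_mem _ ⟨j, rfl⟩)
      simp [φ, ψ, (Ideal.Quotient.eq_zero_iff_mem).2 this]
  have hle : ∀ p ∈ I, f ∣ φ p := by
    intro p hp
    have : I ≤ (Ideal.span {f}).comap φ := by
      rw [hI, Ideal.span_le]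
      rintro _ (rfl | ⟨j, rfl⟩)
      · have := hφψ f
        simp only [ψ] at this
        simp [this, Ideal.mem_span_singleton]
      · simp [φ]
    exact Ideal.mem_span_singleton.1 (this hp)
  rintro p ⟨n, hn⟩
  have h1 := hle _ hn
  rw [map_pow] at h1
  obtain ⟨c, hc⟩ := aux_multilinear_isRadical f hf n _ h1
  have h2 := DFunLike.congr_fun hq p
  simp only [AlgHom.comp_apply, hc, map_mul] at h2
  apply Ideal.Quotient.eq_zero_iff_mem.1
  have h3 : (Ideal.Quotient.mkₐ K I) (ψ f) = 0 := Ideal.Quotient.eq_zero_iff_mem.2 hfI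
  rw [h3, zero_mul] at h2
  exact h2.symm
end

section
/- For each i ∈ {1,…,n−1} let D_i be the unique ℂ-derivation of B with D_i(x_{rs}) = [r = i+1]·x_{is} − [s = i]·x_{r,i+1} for all variables x_{rs} (the Poisson bracket with the coordinate function x_{i,i+1} on gl_n). Then for every i ∈ {1,…,n−1} with i ≠ c and i ≠ n−c, the polynomial obtained by applying D_i to each coefficient of det M(t) ∈ B[t] lies in the ideal of B[t] generated by det M(t) together with the variables x_{ab} with blk(a) ≤ blk(b) (the coordinates of the parabolic subalgebra p). -/
open Finset MvPolynomial

noncomputable section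

/-- The polynomial ring `B = ℂ[x_{ab} : 1 ≤ a, b ≤ n]` in all `n²` variables;
the variable `x_{ab}` (1-indexed) is `X (a-1, b-1)` (0-indexed). -/
abbrev Bring (n : ℕ) : Type := MvPolynomial (Fin n × Fin n) ℂ

/-- The generic matrix `𝒳` of the nilradical: `(a,b)` entry `x_{ab}` if `blk a > blk b`,
and `0` otherwise. -/
def genXB (c : ℕ → ℕ) (n : ℕ) : Matrix (Fin n) (Fin n) (Bring n) :=
  Matrix.of fun a b =>
    if blk c (b.1 + 1) < blk c (a.1 + 1) then X (a, b) else 0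

/-- The matrix `M(t)`: the `(n-c) × (n-c)` submatrix of `𝒳 + t · Id` consisting of
rows `c+1, …, n` and columns `1, …, n-c`, viewed over `B[t]`.  Here `m = n - c`. -/
def MmatB (c : ℕ → ℕ) (n m : ℕ) (h : m + c 1 = n) :
    Matrix (Fin m) (Fin m) (Polynomial (Bring n)) :=
  Matrix.of fun i j =>
    Polynomial.C (genXB c n (Fin.cast h (i.addNat (c 1)))
        (Fin.castLE (le_trans (Nat.le_add_right m (c 1)) (le_of_eq h)) j))
      + if (Fin.cast h (i.addNat (c 1)) : Fin n)
            = Fin.castLE (le_trans (Nat.le_add_right m (c 1)) (le_of_eq h)) j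
        then Polynomial.X else 0
theorem aux_leibniz_prod {R A ι : Type*} [CommRing R] [CommRing A] [Algebra R A] [DecidableEq ι]
    (d : Derivation R A A) (f : ι → A) (s : Finset ι) :
    d (∏ i ∈ s, f i) = ∑ i ∈ s, (∏ j ∈ s.erase i, f j) * d (f i) := by
  induction s using Finset.induction_on with
  | empty => simp
  | insert a s ha ih =>
    rw [Finset.prod_insert ha, Derivation.leibniz, ih, Finset.sum_insert ha,
      Finset.erase_insert ha, smul_eq_mul, smul_eq_mul, add_comm, Finset.mul_sum]
    congr 1
    refine Finset.sum_congr rfl fun i hi => ?_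
    have hne : a ≠ i := fun h => ha (h ▸ hi)
    rw [Finset.erase_insert_of_ne hne, Finset.prod_insert (by simp [ha]), mul_assoc]

theorem aux_deriv_det {R A ι : Type*} [CommRing R] [CommRing A] [Algebra R A] [DecidableEq ι]
    [Fintype ι] (d : Derivation R A A) (M : Matrix ι ι A) :
    d M.det = (M.adjugate * M.map d).trace := by
  have h1 : d M.det = ∑ i, (M.updateCol i (fun k => d (M k i))).det := by
    simp only [Matrix.det_apply]
    rw [map_sum, Finset.sum_comm]
    refine Finset.sum_congr rfl fun σ _ => ?_
    rw [← Finset.smul_sum, Units.smul_def, map_zsmul, Units.smul_def, aux_leibniz_prod]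
    congr 1
    refine Finset.sum_congr rfl fun i _ => ?_
    rw [← Finset.prod_erase_mul _ _ (Finset.mem_univ i), Matrix.updateCol_self]
    congr 1
    refine Finset.prod_congr rfl fun j hj => ?_
    rw [Matrix.updateCol_ne (Finset.ne_of_mem_erase hj)]
  rw [h1, Matrix.trace]
  refine Finset.sum_congr rfl fun i _ => ?_
  rw [← Matrix.cramer_apply, Matrix.cramer_eq_adjugate_mulVec]
  simp [Matrix.mulVec, Matrix.mul_apply, dotProduct]

theorem aux_mem {R A ι : Type*} [CommRing R] [CommRing A] [Algebra R A] [DecidableEq ι]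
    [Fintype ι] (d : Derivation R A A) (M E F : Matrix ι ι A) (J : Ideal A)
    (hE : E.trace = 0) (hF : F.trace = 0)
    (h : ∀ i j, d (M i j) - ((E * M) i j - (M * F) i j) ∈ J) : d M.det ∈ J := by
  have h2 : d M.det = (M.adjugate * (M.map d - (E * M - M * F))).trace := by
    rw [aux_deriv_det, Matrix.mul_sub, Matrix.mul_sub, Matrix.trace_sub, Matrix.trace_sub]
    rw [← Matrix.mul_assoc M.adjugate M F, Matrix.adjugate_mul, ← Matrix.mul_assoc,
      Matrix.trace_mul_comm (M.adjugate * E) M, ← Matrix.mul_assoc, Matrix.mul_adjugate]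
    simp [hE, hF]
  rw [h2, Matrix.trace]
  refine Ideal.sum_mem _ fun i _ => ?_
  rw [Matrix.diag_apply, Matrix.mul_apply]
  exact Ideal.sum_mem _ fun j _ => Ideal.mul_mem_left _ _ (h j i)

theorem aux_blk_mono (c : ℕ → ℕ) (l a b : ℕ) (hab : a ≤ b) (hb : b ≤ blkSum c l) :
    blk c a ≤ blk c b := by
  have hne : {j | b ≤ blkSum c j}.Nonempty := ⟨l, hb⟩
  have := Nat.sInf_mem hne
  exact Nat.sInf_le (le_trans hab this)

theorem aux_entry (c : ℕ → ℕ) (n : ℕ) (p : ℕ) (hp1 : 1 ≤ p) (hp : p < n)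
    (hp' : p - 1 < n)
    (hmono : blk c p ≤ blk c (p + 1))
    (D : Derivation ℂ (Bring n) (Bring n))
    (hD : ∀ r s : Fin n, D (X (r, s)) =
        (if (r : ℕ) = p then X ((⟨p - 1, hp'⟩ : Fin n), s) else 0)
          - (if (s : ℕ) + 1 = p then X (r, (⟨p, hp⟩ : Fin n)) else 0))
    (J : Ideal (Polynomial (Bring n)))
    (hJ : ∀ a b : Fin n, blk c (a.1 + 1) ≤ blk c (b.1 + 1) → Polynomial.C (X (a, b)) ∈ J)
    (r s : Fin n) :
    Polynomial.C (D (genXB c n r s)) -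
      ((if (r : ℕ) = p then (Polynomial.C (genXB c n ⟨p - 1, hp'⟩ s) +
          if (⟨p - 1, hp'⟩ : Fin n) = s then Polynomial.X else 0) else 0) -
       (if (s : ℕ) + 1 = p then (Polynomial.C (genXB c n r ⟨p, hp⟩) +
          if r = (⟨p, hp⟩ : Fin n) then Polynomial.X else 0) else 0)) ∈ J := by
  -- reduction of genXB modulo J
  have hg : ∀ a b : Fin n, Polynomial.C (X (a, b)) - Polynomial.C (genXB c n a b) ∈ J := by
    intro a b
    by_cases h : blk c (b.1 + 1) < blk c (a.1 + 1)
    · simp [genXB, h]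
    · simpa [genXB, h] using hJ a b (not_lt.mp h)
  have hp1' : p - 1 + 1 = p := by omega
  have hX : (if (r : ℕ) = p then (if (⟨p - 1, hp'⟩ : Fin n) = s then
        (Polynomial.X : Polynomial (Bring n)) else 0) else 0) =
      (if (s : ℕ) + 1 = p then (if r = (⟨p, hp⟩ : Fin n) then Polynomial.X else 0) else 0) := by
    simp only [Fin.ext_iff]
    split_ifs <;> first | rfl | omega
  have key : Polynomial.C (D (genXB c n r s)) -
      ((if (r : ℕ) = p then (Polynomial.C (genXB c n ⟨p - 1, hp'⟩ s)) else 0) -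
       (if (s : ℕ) + 1 = p then (Polynomial.C (genXB c n r ⟨p, hp⟩)) else 0)) ∈ J := by
    by_cases h : blk c (s.1 + 1) < blk c (r.1 + 1)
    · have e : genXB c n r s = X (r, s) := by simp [genXB, h]
      rw [e, hD, Polynomial.C_sub]
      have e1 : (Polynomial.C (if (r : ℕ) = p then X ((⟨p - 1, hp'⟩ : Fin n), s) else 0) :
          Polynomial (Bring n)) - (if (r : ℕ) = p then
            (Polynomial.C (genXB c n ⟨p - 1, hp'⟩ s)) else 0) ∈ J := by
        split_ifs
        · exact hg _ _
        · simp
      have e2 : (Polynomial.C (if (s : ℕ) + 1 = p then X (r, (⟨p, hp⟩ : Fin n)) else 0) :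
          Polynomial (Bring n)) - (if (s : ℕ) + 1 = p then
            (Polynomial.C (genXB c n r ⟨p, hp⟩)) else 0) ∈ J := by
        split_ifs
        · exact hg _ _
        · simp
      have := J.sub_mem e1 e2
      convert this using 1
      ring
    · have e : genXB c n r s = 0 := by simp [genXB, h]
      have h' := not_lt.mp h
      have e1 : (if (r : ℕ) = p then
            (Polynomial.C (genXB c n ⟨p - 1, hp'⟩ s)) else 0) = 0 := by
        split_ifs with hr
        · rw [hr] at h'
          have : ¬ (blk c (s.1 + 1) < blk c p) := by omega
          simp [genXB, hp1', this]
        · rfl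
      have e2 : (if (s : ℕ) + 1 = p then
            (Polynomial.C (genXB c n r ⟨p, hp⟩)) else 0) = 0 := by
        split_ifs with hr
        · rw [hr] at h'
          have : ¬ (blk c (p + 1) < blk c (r.1 + 1)) := by omega
          simp [genXB, this]
        · rfl
      rw [e, e1, e2]
      simp
  convert key using 1
  have : ∀ (P Q : Prop) [Decidable P] [Decidable Q] (a b u v w : Polynomial (Bring n)),
      (if P then u else 0) = (if Q then v else 0) →
      w - ((if P then a + u else 0) - (if Q then b + v else 0)) =
      w - ((if P then a else 0) - (if Q then b else 0)) := by
    intro P Q _ _ a b u v w h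
    split_ifs at h ⊢ <;> grind
  exact this _ _ _ _ _ _ _ hX

/-- Lemma 3.10: for `i ∈ {1,…,n-1}` with `i ≠ c` and `i ≠ n - c`, the Poisson bracket
`{x_{i,i+1}, det M(t)}` (the derivation `D_i` applied coefficientwise to `det M(t)`) lies in
the ideal of `B[t]` generated by `det M(t)` and the coordinates of the parabolic `p`. -/
theorem poisson_bracket_detM_mem_span
    (l : ℕ) (hl : 2 ≤ l) (c : ℕ → ℕ) (hc : ∀ i ∈ Finset.Icc 1 l, 0 < c i)
    (hcl : c l = c 1) (n : ℕ) (hn0 : 0 < n) (hn : n = blkSum c l)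
    (m : ℕ) (hm : m + c 1 = n)
    (p : ℕ) (hp1 : 1 ≤ p) (hp2 : p ≤ n - 1) (hpc : p ≠ c 1) (hpnc : p ≠ n - c 1)
    (D : Derivation ℂ (Bring n) (Bring n))
    (hD : ∀ r s : Fin n, D (X (r, s)) =
        (if (r : ℕ) = p then X ((⟨p - 1, by omega⟩ : Fin n), s) else 0)
          - (if (s : ℕ) + 1 = p then X (r, (⟨p, by omega⟩ : Fin n)) else 0)) :
    ((MmatB c n m hm).det).sum (fun k a => Polynomial.C (D a) * Polynomial.X ^ k) ∈
      Ideal.span (insert ((MmatB c n m hm).det)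
        {q : Polynomial (Bring n) | ∃ a b : Fin n,
          blk c (a.1 + 1) ≤ blk c (b.1 + 1) ∧ q = Polynomial.C (X (a, b))}) := by
  have hp : p < n := by omega
  have hp' : p - 1 < n := by omega
  set S : Set (Polynomial (Bring n)) := insert ((MmatB c n m hm).det)
        {q : Polynomial (Bring n) | ∃ a b : Fin n,
          blk c (a.1 + 1) ≤ blk c (b.1 + 1) ∧ q = Polynomial.C (X (a, b))} with hS
  have hJ : ∀ a b : Fin n, blk c (a.1 + 1) ≤ blk c (b.1 + 1) →
      Polynomial.C (X (a, b)) ∈ Ideal.span S := fun a b h =>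
    Ideal.subset_span (Set.mem_insert_of_mem _ ⟨a, b, h, rfl⟩)
  have hmono : blk c p ≤ blk c (p + 1) := aux_blk_mono c l _ _ (by omega) (by omega)
  let d : Derivation ℂ (Polynomial (Bring n)) (Polynomial (Bring n)) :=
    (PolynomialModule.equivPolynomialSelf (R := Bring n)).toLinearMap.compDer D.mapCoeffs
  have hdc : ∀ (q : Polynomial (Bring n)) (k : ℕ), (d q).coeff k = D (q.coeff k) := fun q k => rfl
  have hd : ∀ q : Polynomial (Bring n),
      q.sum (fun k a => Polynomial.C (D a) * Polynomial.X ^ k) = d q := by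
    intro q
    ext1 k
    rw [hdc, Polynomial.sum_def, Polynomial.finset_sum_coeff]
    simp only [Polynomial.coeff_C_mul_X_pow]
    rw [Finset.sum_ite_eq]
    split_ifs with h
    · rfl
    · rw [Polynomial.notMem_support_iff.mp h, map_zero]
  rw [hd]
  let E : Matrix (Fin m) (Fin m) (Polynomial (Bring n)) :=
    Matrix.of fun a b => if (a : ℕ) + c 1 = p ∧ (b : ℕ) + 1 = a then 1 else 0
  let F : Matrix (Fin m) (Fin m) (Polynomial (Bring n)) :=
    Matrix.of fun a b => if (a : ℕ) = p ∧ (b : ℕ) + 1 = a then 1 else 0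
  refine aux_mem d _ E F _ ?_ ?_ ?_
  · simp [E, Matrix.trace]
  · simp [F, Matrix.trace]
  intro i j
  have hlt : i.1 + c 1 < n := by omega
  have hjn : j.1 < n := by omega
  have key := aux_entry c n p hp1 hp hp' hmono D hD (Ideal.span S) hJ ⟨i.1 + c 1, hlt⟩ ⟨j.1, hjn⟩
  have h1 : d (MmatB c n m hm i j) =
      Polynomial.C (D (genXB c n ⟨i.1 + c 1, hlt⟩ ⟨j.1, hjn⟩)) := by
    have hM : MmatB c n m hm i j = Polynomial.C (genXB c n ⟨i.1 + c 1, hlt⟩ ⟨j.1, hjn⟩) +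
      if (⟨i.1 + c 1, hlt⟩ : Fin n) = ⟨j.1, hjn⟩ then Polynomial.X else 0 := rfl
    rw [hM]
    ext1 k
    rw [hdc]
    have h1k : D 1 = 0 := D.map_one_eq_zero
    split_ifs <;> simp only [Polynomial.coeff_add, Polynomial.coeff_C, Polynomial.coeff_X,
      Polynomial.coeff_zero] <;> split_ifs <;> simp [h1k]
  have h2 : (E * MmatB c n m hm) i j = (if i.1 + c 1 = p then
      (Polynomial.C (genXB c n ⟨p - 1, hp'⟩ ⟨j.1, hjn⟩) +
          if (⟨p - 1, hp'⟩ : Fin n) = ⟨j.1, hjn⟩ then Polynomial.X else 0) else 0) := by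
    rw [Matrix.mul_apply]
    split_ifs with hi hpj
    all_goals first
      | (rw [Finset.sum_eq_single (⟨i.1 - 1, by omega⟩ : Fin m)]
         · have e : (⟨i.1 - 1 + c 1, by omega⟩ : Fin n) = ⟨p - 1, hp'⟩ := by
             ext; simp; omega
           have hM : MmatB c n m hm ⟨i.1 - 1, by omega⟩ j =
             Polynomial.C (genXB c n ⟨i.1 - 1 + c 1, by omega⟩ ⟨j.1, hjn⟩) +
             if (⟨i.1 - 1 + c 1, by omega⟩ : Fin n) = ⟨j.1, hjn⟩ then Polynomial.X else 0 := rfl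
           rw [hM, e]
           have : i.1 - 1 + 1 = i.1 := by omega
           simp only [E, Matrix.of_apply, hi, this, hpj]
           simp
         · intro b _ hb
           have : ¬ (b.1 + 1 = i.1) := fun h => hb (by ext; simp; omega)
           simp [E, this]
         · simp)
      | (refine Finset.sum_eq_zero fun b _ => ?_
         simp [E, hi])
  have h3 : (MmatB c n m hm * F) i j = (if j.1 + 1 = p then
      (Polynomial.C (genXB c n ⟨i.1 + c 1, hlt⟩ ⟨p, hp⟩) +
          if (⟨i.1 + c 1, hlt⟩ : Fin n) = ⟨p, hp⟩ then Polynomial.X else 0) else 0) := by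
    rw [Matrix.mul_apply]
    by_cases hj : j.1 + 1 = p
    · have hpm : p < m := by omega
      rw [Finset.sum_eq_single (⟨p, hpm⟩ : Fin m)]
      · have hM : MmatB c n m hm i ⟨p, hpm⟩ =
          Polynomial.C (genXB c n ⟨i.1 + c 1, hlt⟩ ⟨p, hp⟩) +
          if (⟨i.1 + c 1, hlt⟩ : Fin n) = ⟨p, hp⟩ then Polynomial.X else 0 := rfl
        rw [hM, if_pos hj]
        simp [F, hj]
      · intro b _ hb
        have : ¬ (b.1 = p) := fun h => hb (by ext; simp; omega)
        simp [F, this]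
      · simp
    · rw [if_neg hj]
      refine Finset.sum_eq_zero fun b _ => ?_
      have : ¬ (b.1 = p ∧ j.1 + 1 = b.1) := by omega
      simp [F, this]
  rw [h1, h2, h3]
  exact key

end
end
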